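/- Let n ≥ 1, Q = 2n+2, and suppose 1 < p < ∞, 1 < q' < ∞, q is the Hölder conjugate of q' (1/q + 1/q' = 1), p' is the Hölder conjugate of p, 0 < λ < Q, α + β ≥ 0, λ + α + β ≤ Q, β < Q/p', α < Q/q, and 1/p + 1/q' + (λ+α+β)/Q = 2. Let (g_i) be a sequence of nonnegative functions with ‖g_i(v)·|v|^{β}‖_{L^p(ℍⁿ)} = 1 which is tight, i.e. for every δ > 0 there exists R > 0 with ∫_{B_ℍ(0,R)} |g_i(v)|^p |v|^{βp} dv ≥ 1 − δ for all i. Then the sequence I_λ(g_i)(u)·|u|^{-α} is uniformly tight in L^q: for every ε > 0 there exists M > 0 such that ‖I_λ(g_i)(u)·|u|^{-α}·χ_{ℍⁿ \ B_ℍ(0,M)}‖_{L^q(ℍⁿ)} ≤ ε for all i. -/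

import Mathlib

open MeasureTheory ENNReal Filter

noncomputable section

/-- The Heisenberg group `ℍⁿ = ℂⁿ × ℝ` (as a measure space, with Lebesgue/Haar measure). -/
abbrev Hn (n : ℕ) := (Fin n → ℂ) × ℝ

/-- Euclidean norm of the `ℂⁿ` component. -/
def znorm {n : ℕ} (z : Fin n → ℂ) : ℝ := Real.sqrt (∑ j, Complex.normSq (z j))

/-- Homogeneous norm `|u| = (|z|⁴ + t²)^{1/4}` on the Heisenberg group. -/
def Hnorm {n : ℕ} (u : Hn n) : ℝ := (znorm u.1 ^ 4 + u.2 ^ 2) ^ ((1 : ℝ)/4)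

/-- Heisenberg group law `(z,t)·(z',t') = (z+z', t+t'+2 Im (z ⬝ conj z'))`. -/
def Hmul {n : ℕ} (u v : Hn n) : Hn n :=
  (u.1 + v.1, u.2 + v.2 + 2 * (∑ j, u.1 j * (starRingEnd ℂ) (v.1 j)).im)

/-- Heisenberg group inverse `(z,t)⁻¹ = (-z,-t)`. -/
def Hinv {n : ℕ} (u : Hn n) : Hn n := (-u.1, -u.2)

/-- Left-invariant quasi-distance `d(u,v) = |u⁻¹ v|`. -/
def Hdist {n : ℕ} (u v : Hn n) : ℝ := Hnorm (Hmul (Hinv u) v)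

/-- Heisenberg ball `B_ℍ(u,R)`. -/
def Hball {n : ℕ} (u : Hn n) (R : ℝ) : Set (Hn n) := {v | Hdist u v < R}

/-- Fractional integral operator `I_λ(g)(u) = ∫ g(v)/|u⁻¹v|^λ dv`. -/
def Ilam {n : ℕ} (lam : ℝ) (g : Hn n → ℝ) (u : Hn n) : ℝ :=
  ∫ v, g v / Hdist u v ^ lam

open scoped NNReal

/-!
Everything happens on a space with a distance `d` and a measure whose balls of radius `r` have mass
`O(r ^ Q)`. The Heisenberg group enters only through Cygan's triangle inequality for its norm and
the volume of its balls.

The Stein–Weiss inequality is the boundedness of the bilinear form with kernel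
`|u| ^ (-α) |v| ^ (-β) d(u, v) ^ (-lam)`. Where one of `|u|`, `|v|` is at least twice the other, the
kernel is dominated by a Hardy kernel, bounded by Schur's test; where they are comparable, it is
dominated by the Hardy–Littlewood–Sobolev kernel `d(u, v) ^ (-(lam + α + β))`, or treated by
Schur's test in the endpoint case `lam + α + β = Q`.

For the tail at `|u| ≥ R / c` with `c` small, split the mass of `g` at radius `R`. The mass
outside is small by tightness, so the Stein–Weiss inequality handles it. The mass inside only sees
`|v| ≤ c |u|`, where the Hardy kernel with weights `(α + lam, β)` is at most `c ^ η` times the one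
with weights `(α + lam - η, β + η)`, which is still bounded because `β < Q / p'` is strict.
-/

section BilinearBound

variable {X Y : Type*} [MeasurableSpace X] [MeasurableSpace Y] {μ : Measure X} {ν : Measure Y}
  {s t : ℝ} {K K' : X → Y → ℝ≥0∞}

lemma lintegral_lintegral_add_left [SFinite ν] (hK : Measurable (Function.uncurry K))
    (K' : X → Y → ℝ≥0∞) :
    ∫⁻ u, ∫⁻ v, (K u v + K' u v) ∂ν ∂μ =
      ∫⁻ u, ∫⁻ v, K u v ∂ν ∂μ + ∫⁻ u, ∫⁻ v, K' u v ∂ν ∂μ := by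
  rw [← lintegral_add_left (f := fun u ↦ ∫⁻ v, K u v ∂ν) hK.lintegral_prod_right]
  exact lintegral_congr fun u ↦ lintegral_add_left hK.of_uncurry_left _

lemma lintegral_lintegral_le_add_of_le_or_le [SFinite μ] [SFinite ν]
    (hK : Measurable (Function.uncurry K)) {b : X → ℝ≥0∞} {a : Y → ℝ≥0∞} (hb : Measurable b)
    (ha : Measurable a) :
    ∫⁻ u, ∫⁻ v, K u v ∂ν ∂μ ≤ ∫⁻ v, ∫⁻ u in {u | b u ≤ a v}, K u v ∂μ ∂ν +
      ∫⁻ u, ∫⁻ v in {v | a v ≤ b u}, K u v ∂ν ∂μ := by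
  let S : Set (X × Y) := {z | b z.1 ≤ a z.2}
  let K₁ u v := S.indicator (Function.uncurry K) (u, v)
  let K₂ u v := Sᶜ.indicator (Function.uncurry K) (u, v)
  have hK₁ : Measurable (Function.uncurry K₁) :=
    hK.indicator (measurableSet_le (hb.comp measurable_fst) (ha.comp measurable_snd))
  have hsplit u v : K u v = K₁ u v + K₂ u v :=
    (Set.indicator_self_add_compl_apply S (Function.uncurry K) (u, v)).symm
  simp only [hsplit]
  rw [lintegral_lintegral_add_left hK₁, lintegral_lintegral_swap hK₁.aemeasurable]
  simp only [← hsplit]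
  refine add_le_add (lintegral_mono fun v ↦ ?_) (lintegral_mono fun u ↦ ?_)
  · exact (lintegral_indicator (s := {u | b u ≤ a v}) (measurableSet_le hb measurable_const)
      fun u ↦ K u v).le
  · calc ∫⁻ v, K₂ u v ∂ν = ∫⁻ v in {v | b u ≤ a v}ᶜ, K u v ∂ν :=
          lintegral_indicator (s := {v | b u ≤ a v}ᶜ) (measurableSet_le measurable_const ha).compl _
      _ ≤ ∫⁻ v in {v | a v ≤ b u}, K u v ∂ν :=
          lintegral_mono_set fun v (hv : ¬b u ≤ a v) ↦ (not_le.1 hv).le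

lemma lintegral_lintegral_mul_le {b : X → ℝ≥0∞} {C : ℝ≥0∞} (hb : Measurable b)
    (hb1 : ∫⁻ u, b u ∂μ ≤ 1) (hK : Measurable (Function.uncurry K))
    (hC : ∀ᵐ u ∂μ, ∫⁻ v, K u v ∂ν ≤ C) : ∫⁻ u, ∫⁻ v, b u * K u v ∂ν ∂μ ≤ C :=
  calc ∫⁻ u, ∫⁻ v, b u * K u v ∂ν ∂μ
      ≤ ∫⁻ u, b u * C ∂μ := by
        refine lintegral_mono_ae (hC.mono fun u hu ↦ ?_)
        rw [lintegral_const_mul _ hK.of_uncurry_left]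
        gcongr
    _ = (∫⁻ u, b u ∂μ) * C := lintegral_mul_const _ hb
    _ ≤ C := mul_le_of_le_one_left' hb1

/-- Boundedness on `L^{1/t}(μ) × L^{1/s}(ν)` of the bilinear form with nonnegative kernel `K`.
The nonnegative elements of the two unit balls are written as powers `b ^ t` and `a ^ s` of
densities of mass at most one, so that the exponents enter all computations linearly. -/
def IsBilinearBounded (s t : ℝ) (K : X → Y → ℝ≥0∞) (μ : Measure X) (ν : Measure Y) : Prop :=
  ∃ C : ℝ≥0, ∀ (b : X → ℝ≥0∞) (a : Y → ℝ≥0∞), Measurable b → Measurable a →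
    ∫⁻ u, b u ∂μ ≤ 1 → ∫⁻ v, a v ∂ν ≤ 1 →
      ∫⁻ u, ∫⁻ v, b u ^ t * K u v * a v ^ s ∂ν ∂μ ≤ C

namespace IsBilinearBounded

lemma of_le_const_mul (hK : IsBilinearBounded s t K μ ν) (c : ℝ≥0)
    (hle : ∀ᵐ u ∂μ, ∀ᵐ v ∂ν, K' u v ≤ c * K u v) : IsBilinearBounded s t K' μ ν := by
  obtain ⟨C, hC⟩ := hK
  refine ⟨c * C, fun b a hb ha hb1 ha1 ↦ ?_⟩
  calc ∫⁻ u, ∫⁻ v, b u ^ t * K' u v * a v ^ s ∂ν ∂μ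
      ≤ ∫⁻ u, ∫⁻ v, c * (b u ^ t * K u v * a v ^ s) ∂ν ∂μ := by
        refine lintegral_mono_ae (hle.mono fun u hu ↦ lintegral_mono_ae (hu.mono fun v hv ↦ ?_))
        calc b u ^ t * K' u v * a v ^ s ≤ b u ^ t * (c * K u v) * a v ^ s := by gcongr
          _ = c * (b u ^ t * K u v * a v ^ s) := by ring
    _ = c * ∫⁻ u, ∫⁻ v, b u ^ t * K u v * a v ^ s ∂ν ∂μ := by
        simp only [lintegral_const_mul' _ _ coe_ne_top]
    _ ≤ (c * C : ℝ≥0) := by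
        rw [coe_mul]
        gcongr
        exact hC b a hb ha hb1 ha1

lemma add [SFinite ν] (hKm : Measurable (Function.uncurry K)) (hK : IsBilinearBounded s t K μ ν)
    (hK' : IsBilinearBounded s t K' μ ν) :
    IsBilinearBounded s t (fun u v ↦ K u v + K' u v) μ ν := by
  obtain ⟨C, hC⟩ := hK
  obtain ⟨C', hC'⟩ := hK'
  refine ⟨C + C', fun b a hb ha hb1 ha1 ↦ ?_⟩
  have hm : Measurable fun z : X × Y ↦ b z.1 ^ t * K z.1 z.2 * a z.2 ^ s := by
    have : Measurable fun z : X × Y ↦ K z.1 z.2 := hKm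
    fun_prop
  calc ∫⁻ u, ∫⁻ v, b u ^ t * (K u v + K' u v) * a v ^ s ∂ν ∂μ
      = ∫⁻ u, ∫⁻ v, b u ^ t * K u v * a v ^ s ∂ν ∂μ +
          ∫⁻ u, ∫⁻ v, b u ^ t * K' u v * a v ^ s ∂ν ∂μ := by
        simp only [mul_add, add_mul]
        exact lintegral_lintegral_add_left hm _
    _ ≤ (C + C' : ℝ≥0) := by
        rw [coe_add]
        exact add_le_add (hC b a hb ha hb1 ha1) (hC' b a hb ha hb1 ha1)

lemma swap [SFinite μ] [SFinite ν] (hKm : Measurable (Function.uncurry K))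
    (hK : IsBilinearBounded s t K μ ν) : IsBilinearBounded t s (fun v u ↦ K u v) ν μ := by
  obtain ⟨C, hC⟩ := hK
  refine ⟨C, fun a b ha hb ha1 hb1 ↦ ?_⟩
  have hm : Measurable fun z : Y × X ↦ a z.1 ^ s * K z.2 z.1 * b z.2 ^ t := by
    have : Measurable fun z : Y × X ↦ K z.2 z.1 := hKm.comp measurable_swap
    fun_prop
  calc ∫⁻ v, ∫⁻ u, a v ^ s * K u v * b u ^ t ∂μ ∂ν
      = ∫⁻ u, ∫⁻ v, a v ^ s * K u v * b u ^ t ∂ν ∂μ := lintegral_lintegral_swap hm.aemeasurable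
    _ = ∫⁻ u, ∫⁻ v, b u ^ t * K u v * a v ^ s ∂ν ∂μ := by
        simp only [mul_comm, mul_left_comm, mul_assoc]
    _ ≤ C := hC b a hb ha hb1 ha1

end IsBilinearBounded

lemma ennreal_rpow_mul_rpow_mul_rpow_le_add {w₁ w₂ w₃ : ℝ} (h₁ : 0 ≤ w₁) (h₂ : 0 ≤ w₂)
    (h₃ : 0 ≤ w₃) (hw : w₁ + w₂ + w₃ = 1) (x y z : ℝ≥0∞) :
    x ^ w₁ * y ^ w₂ * z ^ w₃ ≤ x + y + z := by
  calc x ^ w₁ * y ^ w₂ * z ^ w₃ ≤ (x + y + z) ^ w₁ * (x + y + z) ^ w₂ * (x + y + z) ^ w₃ := by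
        gcongr
        · exact le_add_right le_self_add
        · exact le_add_right le_add_self
        · exact le_add_self
    _ = x + y + z := by
        rw [← rpow_add_of_nonneg _ _ h₁ h₂, ← rpow_add_of_nonneg _ _ (by positivity) h₃, hw,
          rpow_one]

lemma ennreal_rpow_mul_mul_rpow_le_add (hs : s ≤ 1) (ht : t ≤ 1) (hst : 1 ≤ s + t)
    {x y k m l : ℝ≥0∞} (hk : k ≤ m ^ (1 - t) * l ^ (1 - s)) :
    x ^ t * k * y ^ s ≤ x * y + y * m + x * l := by
  have hx : x ^ t = x ^ (s + t - 1) * x ^ (1 - s) := by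
    rw [← rpow_add_of_nonneg _ _ (by linarith) (by linarith)]; ring_nf
  have hy : y ^ s = y ^ (s + t - 1) * y ^ (1 - t) := by
    rw [← rpow_add_of_nonneg _ _ (by linarith) (by linarith)]; ring_nf
  calc x ^ t * k * y ^ s ≤ x ^ t * (m ^ (1 - t) * l ^ (1 - s)) * y ^ s := by gcongr
    _ = (x * y) ^ (s + t - 1) * (y * m) ^ (1 - t) * (x * l) ^ (1 - s) := by
      rw [hx, hy, mul_rpow_of_nonneg x y (by linarith), mul_rpow_of_nonneg y m (by linarith),
        mul_rpow_of_nonneg x l (by linarith)]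
      ring
    _ ≤ x * y + y * m + x * l := ennreal_rpow_mul_rpow_mul_rpow_le_add
      (by linarith) (by linarith) (by linarith) (by ring) ..

theorem isBilinearBounded_of_schur [SFinite μ] [SFinite ν] {A B : X → Y → ℝ≥0∞}
    (hs : s ≤ 1) (ht : t ≤ 1) (hst : 1 ≤ s + t)
    (hA : Measurable (Function.uncurry A)) (hB : Measurable (Function.uncurry B))
    (hK : ∀ᵐ u ∂μ, ∀ᵐ v ∂ν, K u v ≤ A u v ^ (1 - t) * B u v ^ (1 - s))
    {C₁ C₂ : ℝ≥0} (hA₁ : ∀ᵐ v ∂ν, ∫⁻ u, A u v ∂μ ≤ C₁) (hB₁ : ∀ᵐ u ∂μ, ∫⁻ v, B u v ∂ν ≤ C₂) :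
    IsBilinearBounded s t K μ ν := by
  refine ⟨1 + C₁ + C₂, fun b a hb ha hb1 ha1 ↦ ?_⟩
  have hA' : Measurable fun z : X × Y ↦ A z.1 z.2 := hA
  have hprod : ∫⁻ u, ∫⁻ v, b u * a v ∂ν ∂μ ≤ 1 := by
    exact lintegral_lintegral_mul_le hb hb1 (by fun_prop) (.of_forall fun _ ↦ ha1)
  have hcol : ∫⁻ u, ∫⁻ v, a v * A u v ∂ν ∂μ ≤ C₁ := by
    rw [lintegral_lintegral_swap (by fun_prop)]
    exact lintegral_lintegral_mul_le ha ha1 (hA'.comp measurable_swap) hA₁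
  have hrow : ∫⁻ u, ∫⁻ v, b u * B u v ∂ν ∂μ ≤ C₂ :=
    lintegral_lintegral_mul_le hb hb1 hB hB₁
  calc ∫⁻ u, ∫⁻ v, b u ^ t * K u v * a v ^ s ∂ν ∂μ
      ≤ ∫⁻ u, ∫⁻ v, (b u * a v + a v * A u v + b u * B u v) ∂ν ∂μ :=
        lintegral_mono_ae <| hK.mono fun u hu ↦ lintegral_mono_ae <| hu.mono fun v hv ↦
          ennreal_rpow_mul_mul_rpow_le_add hs ht hst hv
    _ = ∫⁻ u, ∫⁻ v, b u * a v ∂ν ∂μ + ∫⁻ u, ∫⁻ v, a v * A u v ∂ν ∂μ +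
          ∫⁻ u, ∫⁻ v, b u * B u v ∂ν ∂μ := by
        rw [lintegral_lintegral_add_left (by fun_prop), lintegral_lintegral_add_left (by fun_prop)]
    _ ≤ (1 + C₁ + C₂ : ℝ≥0) := by
        push_cast
        gcongr

lemma lintegral_rpow_inv_rpow_le_of_forall_density [SigmaFinite μ] {r : ℝ} (hr : 0 < r)
    (hrt : r + t = 1) (ht : 0 ≤ t) {G : X → ℝ≥0∞} {C : ℝ≥0∞}
    (hC : ∀ b : X → ℝ≥0∞, Measurable b → ∫⁻ u, b u ∂μ ≤ 1 → ∫⁻ u, b u ^ t * G u ∂μ ≤ C) :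
    (∫⁻ u, G u ^ r⁻¹ ∂μ) ^ r ≤ C := by
  rw [← le_rpow_inv_iff hr]
  refine le_of_forall_lt fun m hm ↦ ?_
  obtain ⟨φ, hφG, hφtop, hφm⟩ : ∃ φ : SimpleFunc X ℝ≥0, (∀ u, (φ u : ℝ≥0∞) ≤ G u ^ r⁻¹) ∧
      ∫⁻ u, φ u ∂μ < ∞ ∧ m < ∫⁻ u, φ u ∂μ := by
    simp only [lintegral_eq_nnreal, lt_iSup_iff] at hm
    obtain ⟨ψ, hψG, hψm⟩ := hm
    rw [← SimpleFunc.lintegral_eq_lintegral] at hψm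
    obtain ⟨φ, hφψ, hφ⟩ := SimpleFunc.exists_lt_lintegral_simpleFunc_of_lt_lintegral hψm
    exact ⟨φ, fun u ↦ (coe_le_coe.2 (hφψ u)).trans (hψG u), hφ⟩
  set e := ∫⁻ u, φ u ∂μ with he
  have he0 : e ≠ 0 := (pos_of_gt hφm).ne'
  have hφmeas : Measurable fun u ↦ (φ u : ℝ≥0∞) := φ.measurable.coe_nnreal_ennreal
  have hmass : ∫⁻ u, e⁻¹ * φ u ∂μ ≤ 1 := by
    rw [lintegral_const_mul _ hφmeas, ← he, ENNReal.inv_mul_cancel he0 hφtop.ne]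
  refine hφm.trans_le ((le_rpow_inv_iff hr).2 ?_)
  calc e ^ r = e⁻¹ ^ t * ∫⁻ u, φ u ∂μ := by
        rw [← he, inv_rpow, ← rpow_neg, ← rpow_one e, ← rpow_mul, ← rpow_mul,
          ← rpow_add _ _ he0 hφtop.ne]
        congr 1
        linarith
    _ = ∫⁻ u, e⁻¹ ^ t * φ u ∂μ := (lintegral_const_mul _ hφmeas).symm
    _ ≤ ∫⁻ u, (e⁻¹ * φ u) ^ t * G u ∂μ := by
        refine lintegral_mono fun u ↦ ?_
        calc e⁻¹ ^ t * φ u = (e⁻¹ * φ u) ^ t * (φ u : ℝ≥0∞) ^ r := by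
              rw [mul_rpow_of_nonneg _ _ ht, mul_assoc, ← rpow_add_of_nonneg _ _ ht hr.le,
                add_comm t, hrt, rpow_one]
          _ ≤ (e⁻¹ * φ u) ^ t * G u := by
              gcongr
              exact (le_rpow_inv_iff hr).1 (hφG u)
    _ ≤ C := hC _ (hφmeas.const_mul _) hmass

lemma exists_density_of_eLpNorm_le {f : Y → ℝ≥0∞} {δ : ℝ≥0} (hs : 0 < s) (hδ : δ ≠ 0)
    (hf : AEMeasurable f ν) (hfδ : eLpNorm f (.ofReal s⁻¹) ν ≤ δ) :
    ∃ a : Y → ℝ≥0∞, Measurable a ∧ ∫⁻ v, a v ∂ν ≤ 1 ∧ ∀ᵐ v ∂ν, f v = δ * a v ^ s := by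
  have hδ' : (δ : ℝ≥0∞) ≠ 0 := coe_ne_zero.2 hδ
  have hf_pow : ∫⁻ v, hf.mk f v ^ s⁻¹ ∂ν ≤ (δ : ℝ≥0∞) ^ s⁻¹ := by
    rw [eLpNorm_congr_ae hf.ae_eq_mk, eLpNorm_eq_lintegral_rpow_enorm_toReal (by simpa)
      ofReal_ne_top, toReal_ofReal (by positivity), one_div, inv_inv] at hfδ
    simpa only [enorm_eq_self] using (le_rpow_inv_iff hs).2 hfδ
  refine ⟨fun v ↦ (hf.mk f v / δ) ^ s⁻¹, (hf.measurable_mk.div_const _).pow_const _, ?_, ?_⟩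
  · simp only [div_rpow_of_nonneg _ _ (inv_pos.2 hs).le]
    simp only [div_eq_mul_inv]
    rw [lintegral_mul_const _ (hf.measurable_mk.pow_const _), ← div_eq_mul_inv]
    exact ENNReal.div_le_of_le_mul (by rwa [one_mul])
  · filter_upwards [hf.ae_eq_mk] with v hv
    rw [rpow_inv_rpow hs.ne', ENNReal.mul_div_cancel hδ' coe_ne_top, hv]

namespace IsBilinearBounded

lemma exists_eLpNorm_lintegral_rpow_le [SigmaFinite μ] (hK : IsBilinearBounded s t K μ ν)
    (ht0 : 0 ≤ t) (ht1 : t < 1) :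
    ∃ C : ℝ≥0, ∀ a : Y → ℝ≥0∞, Measurable a → ∫⁻ v, a v ∂ν ≤ 1 →
      eLpNorm (fun u ↦ ∫⁻ v, K u v * a v ^ s ∂ν) (.ofReal (1 - t)⁻¹) μ ≤ C := by
  obtain ⟨C, hC⟩ := hK
  refine ⟨C, fun a ha ha1 ↦ ?_⟩
  have hq : 0 < (1 - t)⁻¹ := inv_pos.2 (by linarith)
  rw [eLpNorm_eq_lintegral_rpow_enorm_toReal (by simpa) ofReal_ne_top, toReal_ofReal hq.le,
    one_div, inv_inv]
  refine lintegral_rpow_inv_rpow_le_of_forall_density (by linarith) (by ring) ht0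
    fun b hb hb1 ↦ le_trans (lintegral_mono_ae ?_) (hC b a hb ha hb1 ha1)
  filter_upwards [ae_lt_top hb (hb1.trans_lt one_lt_top).ne] with u hu
  simp only [enorm_eq_self, mul_assoc]
  rw [lintegral_const_mul' _ _ (rpow_ne_top_of_nonneg ht0 hu.ne)]

theorem exists_eLpNorm_lintegral_le [SigmaFinite μ] (hK : IsBilinearBounded s t K μ ν)
    (hs : 0 < s) (ht0 : 0 ≤ t) (ht1 : t < 1) :
    ∃ C : ℝ≥0, ∀ δ : ℝ≥0, δ ≠ 0 → ∀ f : Y → ℝ≥0∞, AEMeasurable f ν →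
      eLpNorm f (.ofReal s⁻¹) ν ≤ δ →
        eLpNorm (fun u ↦ ∫⁻ v, K u v * f v ∂ν) (.ofReal (1 - t)⁻¹) μ ≤ C * δ := by
  obtain ⟨C, hC⟩ := hK.exists_eLpNorm_lintegral_rpow_le ht0 ht1
  refine ⟨C, fun δ hδ f hf hfδ ↦ ?_⟩
  obtain ⟨a, ha, ha1, hfa⟩ := exists_density_of_eLpNorm_le hs hδ hf hfδ
  have hfactor u : ∫⁻ v, K u v * f v ∂ν = δ * ∫⁻ v, K u v * a v ^ s ∂ν := by
    rw [← lintegral_const_mul' _ _ coe_ne_top]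
    refine lintegral_congr_ae (hfa.mono fun v hv ↦ ?_)
    simp only [hv, mul_left_comm]
  calc eLpNorm (fun u ↦ ∫⁻ v, K u v * f v ∂ν) (.ofReal (1 - t)⁻¹) μ
      ≤ δ • eLpNorm (fun u ↦ ∫⁻ v, K u v * a v ^ s ∂ν) (.ofReal (1 - t)⁻¹) μ :=
        eLpNorm_le_nnreal_smul_eLpNorm_of_ae_le_mul' (.of_forall fun u ↦ (hfactor u).le) _
    _ ≤ C * δ := by
        rw [ENNReal.smul_def, smul_eq_mul, mul_comm]
        gcongr
        exact hC a ha ha1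

end IsBilinearBounded

end BilinearBound

lemma ennreal_rpow_neg_le_mul_rpow_neg {c : ℝ≥0} (hc : c ≠ 0) {x y : ℝ≥0∞} (hyx : y ≤ c * x)
    {κ : ℝ} (hκ : 0 ≤ κ) : x ^ (-κ) ≤ (c ^ κ : ℝ≥0) * y ^ (-κ) := by
  have hcκ : ((c ^ κ : ℝ≥0) : ℝ≥0∞) ≠ 0 := by simp [hc]
  have hpow : y ^ κ ≤ (c ^ κ : ℝ≥0) * x ^ κ := by
    rw [coe_rpow_of_nonneg _ hκ, ← mul_rpow_of_nonneg _ _ hκ]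
    exact rpow_le_rpow hyx hκ
  rw [rpow_neg, rpow_neg, mul_comm, ← ENNReal.div_le_iff hcκ coe_ne_top, ENNReal.div_eq_inv_mul,
    ← ENNReal.mul_inv (.inl hcκ) (.inl coe_ne_top)]
  exact ENNReal.inv_le_inv.2 hpow

lemma ennreal_rpow_le_mul_rpow_of_comparable {c : ℝ≥0} (hc : c ≠ 0) {x y : ℝ≥0∞}
    (hxy : x ≤ c * y) (hyx : y ≤ c * x) (γ : ℝ) : x ^ γ ≤ (c ^ |γ| : ℝ≥0) * y ^ γ := by
  rcases le_total 0 γ with hγ | hγ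
  · rw [abs_of_nonneg hγ, coe_rpow_of_nonneg _ hγ, ← mul_rpow_of_nonneg _ _ hγ]
    exact rpow_le_rpow hxy hγ
  · simpa only [abs_of_nonpos hγ, neg_neg] using
      ennreal_rpow_neg_le_mul_rpow_neg hc hyx (neg_nonneg.2 hγ)

/-- The distance `d` makes `μ` upper `Q`-regular: balls of radius `r` have mass `O(r ^ Q)`.
Distances take values in `ℝ≥0`, so that negative powers can be formed in `ℝ≥0∞`, where they are
infinite at `0`. Radius zero is included in the ball condition: for `0 < Q` it says that points
at distance zero from a given one form a null set. -/
structure IsUpperRegular {X : Type*} [MeasurableSpace X] (d : X → X → ℝ≥0) (Q : ℝ)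
    (μ : Measure X) : Prop where
  measurable_dist : Measurable (Function.uncurry d)
  symm (x y : X) : d x y = d y x
  triangle (x y z : X) : d x z ≤ d x y + d y z
  exists_measure_le : ∃ c : ℝ≥0, ∀ (x : X) (r : ℝ≥0), μ {y | d x y ≤ r} ≤ c * (r : ℝ≥0∞) ^ Q

namespace IsUpperRegular

variable {X : Type*} [MeasurableSpace X] {d : X → X → ℝ≥0} {Q : ℝ} {μ : Measure X}

section PowerIntegrals

variable (h : IsUpperRegular d Q μ)
include h

lemma ae_dist_ne_zero (hQ : 0 < Q) (x : X) : ∀ᵐ y ∂μ, d x y ≠ 0 := by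
  obtain ⟨c, hc⟩ := h.exists_measure_le
  simpa [ae_iff, hQ] using hc x 0

lemma measurable_dist_rpow (γ : ℝ) : Measurable fun z : X × X ↦ (d z.1 z.2 : ℝ≥0∞) ^ γ :=
  h.measurable_dist.coe_nnreal_ennreal.pow_const γ

lemma exists_setLIntegral_annulus_le (γ : ℝ) :
    ∃ C : ℝ≥0, ∀ (x : X) (r : ℝ≥0), r ≠ 0 →
      ∫⁻ y in {y | d x y ≤ 2 * r ∧ r ≤ 2 * d x y}, (d x y : ℝ≥0∞) ^ (-γ) ∂μ ≤
        C * (r : ℝ≥0∞) ^ (Q - γ) := by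
  obtain ⟨c, hc⟩ := h.exists_measure_le
  refine ⟨2 ^ |-γ| * (c * 2 ^ Q), fun x r hr ↦ ?_⟩
  have hr' : (r : ℝ≥0∞) ≠ 0 := coe_ne_zero.2 hr
  calc ∫⁻ y in {y | d x y ≤ 2 * r ∧ r ≤ 2 * d x y}, (d x y : ℝ≥0∞) ^ (-γ) ∂μ
      ≤ ∫⁻ _ in {y | d x y ≤ 2 * r ∧ r ≤ 2 * d x y}, (2 ^ |-γ| : ℝ≥0) * (r : ℝ≥0∞) ^ (-γ) ∂μ := by
        refine setLIntegral_mono measurable_const fun y hy ↦ ?_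
        exact ennreal_rpow_le_mul_rpow_of_comparable two_ne_zero (mod_cast hy.1) (mod_cast hy.2) _
    _ ≤ (2 ^ |-γ| : ℝ≥0) * (r : ℝ≥0∞) ^ (-γ) * (c * (2 * r : ℝ≥0) ^ Q) := by
        rw [setLIntegral_const]
        gcongr
        exact (measure_mono fun y hy ↦ hy.1).trans (hc x (2 * r))
    _ = (2 ^ |-γ| * (c * 2 ^ Q) : ℝ≥0) * (r : ℝ≥0∞) ^ (Q - γ) := by
        rw [coe_mul 2 r, mul_rpow_of_ne_top coe_ne_top coe_ne_top, sub_eq_add_neg,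
          rpow_add _ _ hr' coe_ne_top, coe_mul, coe_mul, ← coe_rpow_of_ne_zero two_ne_zero]
        ring

lemma exists_setLIntegral_le_of_geometric {b : ℝ≥0} {γ : ℝ} (hb0 : b ≠ 0)
    (hb : (b : ℝ≥0∞) ^ (Q - γ) < 1) :
    ∃ C : ℝ≥0, ∀ (x : X) (r : ℝ≥0), r ≠ 0 → ∀ E : Set X,
      (∀ᵐ y ∂μ, y ∈ E → ∃ k : ℕ, d x y ≤ 2 * (r * b ^ k) ∧ r * b ^ k ≤ 2 * d x y) →
        ∫⁻ y in E, (d x y : ℝ≥0∞) ^ (-γ) ∂μ ≤ C * (r : ℝ≥0∞) ^ (Q - γ) := by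
  obtain ⟨C, hC⟩ := h.exists_setLIntegral_annulus_le γ
  have hsum : (1 - (b : ℝ≥0∞) ^ (Q - γ))⁻¹ ≠ ∞ := ENNReal.inv_ne_top.2 (tsub_pos_of_lt hb).ne'
  refine ⟨C * (1 - (b : ℝ≥0∞) ^ (Q - γ))⁻¹.toNNReal, fun x r hr E hE ↦ ?_⟩
  let S (k : ℕ) : Set X := {y | d x y ≤ 2 * (r * b ^ k) ∧ r * b ^ k ≤ 2 * d x y}
  have hpow (k : ℕ) : ((r * b ^ k : ℝ≥0) : ℝ≥0∞) ^ (Q - γ) =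
      (r : ℝ≥0∞) ^ (Q - γ) * ((b : ℝ≥0∞) ^ (Q - γ)) ^ k := by
    rw [coe_mul, coe_pow, mul_rpow_of_ne_top coe_ne_top (by finiteness), ← rpow_natCast,
      ← rpow_natCast, ← rpow_mul, ← rpow_mul, mul_comm (k : ℝ)]
  calc ∫⁻ y in E, (d x y : ℝ≥0∞) ^ (-γ) ∂μ
      ≤ ∫⁻ y in ⋃ k, S k, (d x y : ℝ≥0∞) ^ (-γ) ∂μ :=
        lintegral_mono_set' (hE.mono fun y hy hyE ↦ Set.mem_iUnion.2 (hy hyE))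
    _ ≤ ∑' k, ∫⁻ y in S k, (d x y : ℝ≥0∞) ^ (-γ) ∂μ := lintegral_iUnion_le _ _
    _ ≤ ∑' k : ℕ, C * (r : ℝ≥0∞) ^ (Q - γ) * ((b : ℝ≥0∞) ^ (Q - γ)) ^ k := by
        gcongr with k
        exact (hC x _ (by positivity)).trans_eq (by rw [hpow, mul_assoc])
    _ = _ := by
        rw [ENNReal.tsum_mul_left, tsum_geometric, coe_mul, coe_toNNReal hsum]
        ring

lemma exists_setLIntegral_closedBall_le {γ : ℝ} (hQ : 0 < Q) (hγ : γ < Q) :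
    ∃ C : ℝ≥0, ∀ (x : X) (r : ℝ≥0), r ≠ 0 →
      ∫⁻ y in {y | d x y ≤ r}, (d x y : ℝ≥0∞) ^ (-γ) ∂μ ≤ C * (r : ℝ≥0∞) ^ (Q - γ) := by
  obtain ⟨C, hC⟩ := h.exists_setLIntegral_le_of_geometric (b := 2⁻¹) (γ := γ) (by simp)
    (rpow_lt_one (mod_cast inv_lt_one_of_one_lt₀ one_lt_two) (by linarith))
  refine ⟨C, fun x r hr ↦ hC x r hr _ ?_⟩
  filter_upwards [h.ae_dist_ne_zero hQ x] with y hy hyr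
  obtain ⟨k, hk, hk'⟩ := exists_nat_pow_near_of_lt_one (x := d x y / r) (y := 2⁻¹)
    (by positivity) (div_le_one_of_le₀ hyr r.2) (by positivity) (inv_lt_one_of_one_lt₀ one_lt_two)
  rw [lt_div_iff₀ (by positivity), pow_succ] at hk
  rw [div_le_iff₀ (by positivity)] at hk'
  exact ⟨k, by linarith, by linarith⟩

lemma exists_setLIntegral_compl_ball_le {γ : ℝ} (hγ : Q < γ) :
    ∃ C : ℝ≥0, ∀ (x : X) (r : ℝ≥0), r ≠ 0 →
      ∫⁻ y in {y | r ≤ d x y}, (d x y : ℝ≥0∞) ^ (-γ) ∂μ ≤ C * (r : ℝ≥0∞) ^ (Q - γ) := by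
  obtain ⟨C, hC⟩ := h.exists_setLIntegral_le_of_geometric (b := 2) (γ := γ) (by simp)
    (rpow_lt_one_of_one_lt_of_neg (mod_cast one_lt_two) (by linarith))
  refine ⟨C, fun x r hr ↦ hC x r hr _ (.of_forall fun y hy ↦ ?_)⟩
  obtain ⟨k, hk, hk'⟩ := exists_nat_pow_near (x := d x y / r) (y := 2)
    ((one_le_div₀ (by positivity)).2 hy) one_lt_two
  rw [div_lt_iff₀ (by positivity), pow_succ] at hk'
  rw [le_div_iff₀ (by positivity)] at hk
  exact ⟨k, by linarith, by linarith⟩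

end PowerIntegrals

section HardyLittlewoodSobolev

variable {s t : ℝ} (h : IsUpperRegular d Q μ)
include h

lemma exists_setLIntegral_closedBall_density_le (hQ : 0 < Q) (hs : s < 1) (hst : 1 < s + t) :
    ∃ C : ℝ≥0, ∀ (x : X) (r : ℝ≥0), r ≠ 0 → ∀ b : X → ℝ≥0∞,
      ∫⁻ y in {y | b y ≤ (r : ℝ≥0∞) ^ (-Q)} ∩ {y | d x y ≤ r},
          (d x y : ℝ≥0∞) ^ (-(Q * (2 - s - t))) * b y ^ t ∂μ ≤
        C * (r : ℝ≥0∞) ^ (-(Q * (1 - s))) := by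
  obtain ⟨C, hC⟩ := h.exists_setLIntegral_closedBall_le (γ := Q * (2 - s - t)) hQ (by nlinarith)
  refine ⟨C, fun x r hr b ↦ ?_⟩
  have hr' : (r : ℝ≥0∞) ≠ 0 := coe_ne_zero.2 hr
  set M : ℝ≥0∞ := ((r : ℝ≥0∞) ^ (-Q)) ^ t with hM
  have hMtop : M ≠ ∞ :=
    rpow_ne_top_of_nonneg (by linarith) (rpow_ne_top_of_ne_zero hr' coe_ne_top)
  have hmeas : Measurable fun y ↦ (d x y : ℝ≥0∞) ^ (-(Q * (2 - s - t))) * M :=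
    ((h.measurable_dist_rpow _).comp measurable_prodMk_left).mul_const _
  calc ∫⁻ y in {y | b y ≤ (r : ℝ≥0∞) ^ (-Q)} ∩ {y | d x y ≤ r},
          (d x y : ℝ≥0∞) ^ (-(Q * (2 - s - t))) * b y ^ t ∂μ
      ≤ ∫⁻ y in {y | b y ≤ (r : ℝ≥0∞) ^ (-Q)} ∩ {y | d x y ≤ r},
          (d x y : ℝ≥0∞) ^ (-(Q * (2 - s - t))) * M ∂μ :=
        setLIntegral_mono hmeas fun y hy ↦ by
          gcongr
          exact rpow_le_rpow hy.1 (by linarith)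
    _ ≤ ∫⁻ y in {y | d x y ≤ r}, (d x y : ℝ≥0∞) ^ (-(Q * (2 - s - t))) * M ∂μ :=
        lintegral_mono_set Set.inter_subset_right
    _ ≤ C * (r : ℝ≥0∞) ^ (Q - Q * (2 - s - t)) * M := by
        rw [lintegral_mul_const' _ _ hMtop]
        gcongr
        exact hC x r hr
    _ = C * (r : ℝ≥0∞) ^ (-(Q * (1 - s))) := by
        rw [hM, ← rpow_mul, mul_assoc, ← rpow_add _ _ hr' coe_ne_top]
        ring_nf

lemma exists_setLIntegral_compl_ball_density_le (hQ : 0 < Q) (hs : s < 1) (ht0 : 0 ≤ t)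
    (ht : t < 1) :
    ∃ C : ℝ≥0, ∀ (x : X) (r : ℝ≥0), r ≠ 0 → ∀ b : X → ℝ≥0∞, Measurable b →
      ∫⁻ y, b y ∂μ ≤ 1 →
        ∫⁻ y in {y | r ≤ d x y}, (d x y : ℝ≥0∞) ^ (-(Q * (2 - s - t))) * b y ^ t ∂μ ≤
          C * (r : ℝ≥0∞) ^ (-(Q * (1 - s))) := by
  have ht' : 0 < 1 - t := by linarith
  set γ := Q * (2 - s - t) / (1 - t)
  have hγt : γ * (1 - t) = Q * (2 - s - t) := div_mul_cancel₀ _ ht'.ne'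
  obtain ⟨C, hC⟩ := h.exists_setLIntegral_compl_ball_le (γ := γ)
    ((lt_div_iff₀ ht').2 (by nlinarith))
  refine ⟨C ^ (1 - t), fun x r hr b hb hb1 ↦ ?_⟩
  have hmeas : Measurable fun y ↦ (d x y : ℝ≥0∞) ^ (-γ) :=
    (h.measurable_dist_rpow _).comp measurable_prodMk_left
  calc ∫⁻ y in {y | r ≤ d x y}, (d x y : ℝ≥0∞) ^ (-(Q * (2 - s - t))) * b y ^ t ∂μ
      = ∫⁻ y in {y | r ≤ d x y}, ((d x y : ℝ≥0∞) ^ (-γ)) ^ (1 - t) * b y ^ t ∂μ := by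
        simp only [← rpow_mul, neg_mul, hγt]
    _ ≤ (∫⁻ y in {y | r ≤ d x y}, (d x y : ℝ≥0∞) ^ (-γ) ∂μ) ^ (1 - t) *
          (∫⁻ y in {y | r ≤ d x y}, b y ∂μ) ^ t :=
        lintegral_mul_norm_pow_le hmeas.aemeasurable hb.aemeasurable ht'.le ht0 (by ring)
    _ ≤ (C * (r : ℝ≥0∞) ^ (Q - γ)) ^ (1 - t) * 1 ^ t := by
        gcongr
        · exact hC x r hr
        · exact (setLIntegral_le_lintegral _ _).trans hb1
    _ = (C ^ (1 - t) : ℝ≥0) * (r : ℝ≥0∞) ^ (-(Q * (1 - s))) := by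
        rw [one_rpow, mul_one, mul_rpow_of_nonneg _ _ ht'.le, coe_rpow_of_nonneg _ ht'.le,
          ← rpow_mul, sub_mul, hγt]
        ring_nf

lemma exists_setLIntegral_density_le (hQ : 0 < Q) (hs : s < 1) (ht : t < 1) (hst : 1 < s + t) :
    ∃ C : ℝ≥0, ∀ (x : X) (m : ℝ≥0∞), m ≠ 0 → m ≠ ∞ → ∀ b : X → ℝ≥0∞, Measurable b →
      ∫⁻ y, b y ∂μ ≤ 1 →
        ∫⁻ y in {y | b y ≤ m}, (d x y : ℝ≥0∞) ^ (-(Q * (2 - s - t))) * b y ^ t ∂μ ≤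
          C * m ^ (1 - s) := by
  obtain ⟨C₁, hC₁⟩ := h.exists_setLIntegral_closedBall_density_le hQ hs hst
  obtain ⟨C₂, hC₂⟩ := h.exists_setLIntegral_compl_ball_density_le hQ hs (by linarith) ht
  refine ⟨C₁ + C₂, fun x m hm hm' b hb hb1 ↦ ?_⟩
  -- At this radius the two ball estimates balance.
  obtain ⟨r, hr⟩ : ∃ r : ℝ≥0, (r : ℝ≥0∞) = m ^ (-Q)⁻¹ :=
    ⟨_, coe_toNNReal (rpow_ne_top_of_ne_zero hm hm')⟩
  have hr0 : r ≠ 0 := by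
    rw [← coe_ne_zero, hr]
    exact (rpow_pos (pos_of_ne_zero hm) hm').ne'
  have hrm : (r : ℝ≥0∞) ^ (-Q) = m := by rw [hr, rpow_inv_rpow (by linarith)]
  have hrs : (r : ℝ≥0∞) ^ (-(Q * (1 - s))) = m ^ (1 - s) := by rw [← neg_mul, rpow_mul, hrm]
  have hsplit : {y | b y ≤ m} ⊆ ({y | b y ≤ m} ∩ {y | d x y ≤ r}) ∪ {y | r ≤ d x y} :=
    fun y hy ↦ (le_total (d x y) r).imp (⟨hy, ·⟩) id
  calc ∫⁻ y in {y | b y ≤ m}, (d x y : ℝ≥0∞) ^ (-(Q * (2 - s - t))) * b y ^ t ∂μ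
      ≤ _ := lintegral_mono_set hsplit
    _ ≤ _ := lintegral_union_le _ _ _
    _ ≤ C₁ * (r : ℝ≥0∞) ^ (-(Q * (1 - s))) + C₂ * (r : ℝ≥0∞) ^ (-(Q * (1 - s))) :=
        add_le_add (hrm ▸ hC₁ x r hr0 b) (hC₂ x r hr0 b hb hb1)
    _ = (C₁ + C₂ : ℝ≥0) * m ^ (1 - s) := by rw [hrs, coe_add, add_mul]

lemma exists_lintegral_setLIntegral_density_le (hQ : 0 < Q) (hs : s < 1) (ht : t < 1)
    (hst : 1 < s + t) :
    ∃ C : ℝ≥0, ∀ a b : X → ℝ≥0∞, Measurable a → Measurable b → ∫⁻ x, a x ∂μ ≤ 1 →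
      ∫⁻ y, b y ∂μ ≤ 1 →
        ∫⁻ x, ∫⁻ y in {y | b y ≤ a x},
          a x ^ s * (d x y : ℝ≥0∞) ^ (-(Q * (2 - s - t))) * b y ^ t ∂μ ∂μ ≤ C := by
  obtain ⟨C, hC⟩ := h.exists_setLIntegral_density_le hQ hs ht hst
  refine ⟨C, fun a b ha hb ha1 hb1 ↦ ?_⟩
  calc ∫⁻ x, ∫⁻ y in {y | b y ≤ a x},
          a x ^ s * (d x y : ℝ≥0∞) ^ (-(Q * (2 - s - t))) * b y ^ t ∂μ ∂μ
      ≤ ∫⁻ x, C * a x ∂μ := by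
        refine lintegral_mono_ae ?_
        filter_upwards [ae_lt_top ha (ha1.trans_lt one_lt_top).ne] with x hx
        rcases eq_or_ne (a x) 0 with h0 | h0
        · simp [h0, show 0 < s by linarith]
        simp only [mul_assoc]
        rw [lintegral_const_mul' _ _ (rpow_ne_top_of_ne_zero h0 hx.ne)]
        calc a x ^ s * _ ≤ a x ^ s * (C * a x ^ (1 - s)) := by
              gcongr
              exact hC x _ h0 hx.ne b hb hb1
          _ = C * a x := by
              rw [mul_left_comm, ← rpow_add _ _ h0 hx.ne, add_sub_cancel, rpow_one]
    _ = C * ∫⁻ x, a x ∂μ := lintegral_const_mul _ ha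
    _ ≤ C := mul_le_of_le_one_right' ha1

/-- The Hardy–Littlewood–Sobolev inequality. Each half `{b y ≤ a x}`, `{a x ≤ b y}` of the double
integral is estimated pointwise in the variable carrying the larger density. -/
theorem isBilinearBounded_dist_rpow [SFinite μ] (hQ : 0 < Q) (hs : s < 1) (ht : t < 1)
    (hst : 1 < s + t) :
    IsBilinearBounded s t (fun u v ↦ (d u v : ℝ≥0∞) ^ (-(Q * (2 - s - t)))) μ μ := by
  obtain ⟨C₁, hC₁⟩ := h.exists_lintegral_setLIntegral_density_le hQ hs ht hst
  obtain ⟨C₂, hC₂⟩ := h.exists_lintegral_setLIntegral_density_le hQ ht hs (by linarith)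
  rw [sub_right_comm] at hC₂
  refine ⟨C₁ + C₂, fun b a hb ha hb1 ha1 ↦ ?_⟩
  have hF : Measurable (Function.uncurry fun u v ↦
      b u ^ t * (d u v : ℝ≥0∞) ^ (-(Q * (2 - s - t))) * a v ^ s) := by
    have := h.measurable_dist_rpow (-(Q * (2 - s - t)))
    fun_prop
  refine (lintegral_lintegral_le_add_of_le_or_le hF hb ha).trans ?_
  rw [coe_add]
  refine add_le_add (le_of_eq_of_le ?_ (hC₁ a b ha hb ha1 hb1)) (hC₂ b a hb ha hb1 ha1)
  refine lintegral_congr fun v ↦ lintegral_congr fun u ↦ ?_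
  rw [h.symm v u]
  ring

end HardyLittlewoodSobolev

end IsUpperRegular

section Kernels

variable {X : Type*} {d : X → X → ℝ≥0}

/-- The Hardy kernel `|u| ^ (-α) |v| ^ (-β)` on `|v| ≤ |u|`, where `|u|` is the distance from the
base point `o`. -/
def hardyKernel (d : X → X → ℝ≥0) (o : X) (α β : ℝ) (u v : X) : ℝ≥0∞ :=
  if d o v ≤ d o u then (d o u : ℝ≥0∞) ^ (-α) * (d o v : ℝ≥0∞) ^ (-β) else 0

/-- The Stein–Weiss kernel `|u| ^ (-α) |v| ^ (-β) d(u, v) ^ (-lam)`, where `|u|` is the distance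
from the base point `o`. -/
def steinWeissKernel (d : X → X → ℝ≥0) (o : X) (lam α β : ℝ) (u v : X) : ℝ≥0∞ :=
  (d o u : ℝ≥0∞) ^ (-α) * (d o v : ℝ≥0∞) ^ (-β) * (d u v : ℝ≥0∞) ^ (-lam)

/-- The part of the Stein–Weiss kernel on which `|u|` and `|v|` are comparable; the weight
`|u| ^ (-α) |v| ^ (-β)` is then comparable to `|u| ^ (-σ)` for `σ = α + β`. -/
def diagonalKernel (d : X → X → ℝ≥0) (o : X) (lam σ : ℝ) (u v : X) : ℝ≥0∞ :=
  if d o u ≤ 2 * d o v ∧ d o v ≤ 2 * d o u then (d o u : ℝ≥0∞) ^ (-σ) * (d u v : ℝ≥0∞) ^ (-lam)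
  else 0

lemma hardyKernel_rpow_mul_rpow {Q s t : ℝ} {o u v : X} {α β : ℝ} (e : ℝ) (hs : s < 1) (ht : t < 1)
    (hu : d o u ≠ 0) (hv : d o v ≠ 0) (hα : (Q + e) * (1 - t) + e * (1 - s) = α)
    (hβ : -e * (1 - t) + (Q - e) * (1 - s) = β) :
    hardyKernel d o (Q + e) (-e) u v ^ (1 - t) * hardyKernel d o e (Q - e) u v ^ (1 - s) =
      hardyKernel d o α β u v := by
  have hs' : 0 < 1 - s := by linarith
  have ht' : 0 < 1 - t := by linarith
  have hu' : (d o u : ℝ≥0∞) ≠ 0 := coe_ne_zero.2 hu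
  have hv' : (d o v : ℝ≥0∞) ≠ 0 := coe_ne_zero.2 hv
  unfold hardyKernel
  split_ifs
  · rw [mul_rpow_of_nonneg _ _ ht'.le, mul_rpow_of_nonneg _ _ hs'.le, mul_mul_mul_comm,
      ← rpow_mul, ← rpow_mul, ← rpow_mul, ← rpow_mul, ← rpow_add _ _ hu' coe_ne_top,
      ← rpow_add _ _ hv' coe_ne_top, ← hα, ← hβ]
    ring_nf
  · simp [ht', hs']

lemma hardyKernel_le_of_le_mul {o u v : X} {c : ℝ≥0} (hc : c ≠ 0) (hu : d o u ≠ 0) (hv : d o v ≠ 0)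
    (hvu : d o v ≤ c * d o u) (α β : ℝ) {η : ℝ} (hη : 0 ≤ η) :
    hardyKernel d o α β u v ≤ (c ^ η : ℝ≥0) * hardyKernel d o (α - η) (β + η) u v := by
  have hpow : (d o u : ℝ≥0∞) ^ (-η) ≤ (c ^ η : ℝ≥0) * (d o v : ℝ≥0∞) ^ (-η) :=
    ennreal_rpow_neg_le_mul_rpow_neg hc (mod_cast hvu) hη
  unfold hardyKernel
  split_ifs
  · calc (d o u : ℝ≥0∞) ^ (-α) * (d o v : ℝ≥0∞) ^ (-β)
        = (d o u : ℝ≥0∞) ^ (-η) * (d o u : ℝ≥0∞) ^ (-(α - η)) * (d o v : ℝ≥0∞) ^ (-β) := by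
          rw [← rpow_add _ _ (coe_ne_zero.2 hu) coe_ne_top]
          ring_nf
      _ ≤ (c ^ η : ℝ≥0) * (d o v : ℝ≥0∞) ^ (-η) * (d o u : ℝ≥0∞) ^ (-(α - η)) *
          (d o v : ℝ≥0∞) ^ (-β) := by gcongr
      _ = _ := by
          rw [neg_add, rpow_add _ _ (coe_ne_zero.2 hv) coe_ne_top]
          ring
  · exact zero_le

lemma steinWeissKernel_le_diagonalKernel {o u v : X} (lam α β : ℝ) (hu : d o u ≠ 0)
    (huv : d o u ≤ 2 * d o v) (hvu : d o v ≤ 2 * d o u) :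
    steinWeissKernel d o lam α β u v ≤ (2 ^ |β| : ℝ≥0) * diagonalKernel d o lam (α + β) u v := by
  have hpow := ennreal_rpow_le_mul_rpow_of_comparable (x := d o v) (y := d o u) two_ne_zero
    (mod_cast hvu) (mod_cast huv) (-β)
  rw [steinWeissKernel, diagonalKernel, if_pos ⟨huv, hvu⟩, neg_add, rpow_add _ _
    (coe_ne_zero.2 hu) coe_ne_top]
  calc _ ≤ (d o u : ℝ≥0∞) ^ (-α) * ((2 ^ |β| : ℝ≥0) * (d o u : ℝ≥0∞) ^ (-β)) *
        (d u v : ℝ≥0∞) ^ (-lam) := by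
        rw [← abs_neg β]
        gcongr
    _ = _ := by ring

end Kernels

namespace IsUpperRegular

variable {X : Type*} [MeasurableSpace X] {d : X → X → ℝ≥0} {Q : ℝ} {μ : Measure X} {s t : ℝ}

section Hardy

variable (h : IsUpperRegular d Q μ)
include h

lemma measurable_dist_left (o : X) : Measurable (d o) := h.measurable_dist.of_uncurry_left

lemma measurable_hardyKernel (o : X) (α β : ℝ) :
    Measurable (Function.uncurry (hardyKernel d o α β)) := by
  have := h.measurable_dist_left o
  exact .ite (measurableSet_le (by fun_prop) (by fun_prop)) (by fun_prop) measurable_const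

lemma exists_lintegral_hardyKernel_left_le (o : X) {e : ℝ} (he : 0 < e) :
    ∃ C : ℝ≥0, ∀ v, d o v ≠ 0 → ∫⁻ u, hardyKernel d o (Q + e) (-e) u v ∂μ ≤ C := by
  obtain ⟨C, hC⟩ := h.exists_setLIntegral_compl_ball_le (γ := Q + e) (by linarith)
  refine ⟨C, fun v hv ↦ ?_⟩
  have hv' : (d o v : ℝ≥0∞) ≠ 0 := coe_ne_zero.2 hv
  calc ∫⁻ u, hardyKernel d o (Q + e) (-e) u v ∂μ
      = ∫⁻ u in {u | d o v ≤ d o u}, (d o u : ℝ≥0∞) ^ (-(Q + e)) * (d o v : ℝ≥0∞) ^ (- -e) ∂μ :=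
        lintegral_indicator (measurableSet_le measurable_const (h.measurable_dist_left o)) _
    _ ≤ C * (d o v : ℝ≥0∞) ^ (Q - (Q + e)) * (d o v : ℝ≥0∞) ^ (- -e) := by
        rw [lintegral_mul_const' _ _ (rpow_ne_top_of_ne_zero hv' coe_ne_top)]
        gcongr
        exact hC o _ hv
    _ = C := by
        rw [mul_assoc, ← rpow_add _ _ hv' coe_ne_top]
        simp

lemma exists_lintegral_hardyKernel_right_le (hQ : 0 < Q) (o : X) {e : ℝ} (he : 0 < e) :
    ∃ C : ℝ≥0, ∀ u, d o u ≠ 0 → ∫⁻ v, hardyKernel d o e (Q - e) u v ∂μ ≤ C := by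
  obtain ⟨C, hC⟩ := h.exists_setLIntegral_closedBall_le (γ := Q - e) hQ (by linarith)
  refine ⟨C, fun u hu ↦ ?_⟩
  have hu' : (d o u : ℝ≥0∞) ≠ 0 := coe_ne_zero.2 hu
  calc ∫⁻ v, hardyKernel d o e (Q - e) u v ∂μ
      = ∫⁻ v in {v | d o v ≤ d o u}, (d o u : ℝ≥0∞) ^ (-e) * (d o v : ℝ≥0∞) ^ (-(Q - e)) ∂μ :=
        lintegral_indicator (measurableSet_le (h.measurable_dist_left o) measurable_const) _
    _ ≤ (d o u : ℝ≥0∞) ^ (-e) * (C * (d o u : ℝ≥0∞) ^ (Q - (Q - e))) := by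
        rw [lintegral_const_mul' _ _ (rpow_ne_top_of_ne_zero hu' coe_ne_top)]
        gcongr
        exact hC o _ hu
    _ = C := by
        rw [mul_left_comm, ← rpow_add _ _ hu' coe_ne_top]
        simp

theorem isBilinearBounded_hardyKernel [SFinite μ] (hQ : 0 < Q) (hs : s < 1) (ht : t < 1)
    (hst : 1 ≤ s + t) (o : X) {α β : ℝ} (hαβ : α + β = Q * (2 - s - t)) (hβ : β < Q * (1 - s)) :
    IsBilinearBounded s t (hardyKernel d o α β) μ μ := by
  set e := (Q * (1 - s) - β) / (2 - s - t)
  have he : 0 < e := div_pos (by linarith) (by linarith)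
  have hes : e * (2 - s - t) = Q * (1 - s) - β := div_mul_cancel₀ _ (by linarith)
  obtain ⟨C₁, hC₁⟩ := h.exists_lintegral_hardyKernel_left_le o he
  obtain ⟨C₂, hC₂⟩ := h.exists_lintegral_hardyKernel_right_le hQ o he
  have hne := h.ae_dist_ne_zero hQ o
  refine isBilinearBounded_of_schur hs.le ht.le hst (h.measurable_hardyKernel o (Q + e) (-e))
    (h.measurable_hardyKernel o e (Q - e)) ?_ (hne.mono hC₁) (hne.mono hC₂)
  filter_upwards [hne] with u hu
  filter_upwards [hne] with v hv
  exact (hardyKernel_rpow_mul_rpow e hs ht hu hv (by linarith) (by linarith)).ge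

end Hardy

section SteinWeiss

variable (h : IsUpperRegular d Q μ)
include h

lemma measurable_diagonalKernel (o : X) (lam σ : ℝ) :
    Measurable (Function.uncurry (diagonalKernel d o lam σ)) := by
  have hN := h.measurable_dist_left o
  have hd := h.measurable_dist_rpow (-lam)
  exact .ite ((measurableSet_le (by fun_prop) (by fun_prop)).inter
    (measurableSet_le (by fun_prop) (by fun_prop))) (by fun_prop) measurable_const

lemma dist_le_three_mul {o u v : X} (hvu : d o v ≤ 2 * d o u) : d u v ≤ 3 * d o u := by
  have := h.triangle u o v
  rw [h.symm u o] at this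
  linarith

lemma diagonalKernel_le_swap (o : X) {lam σ : ℝ} (hσ : 0 ≤ σ) (u v : X) :
    diagonalKernel d o lam σ u v ≤ (2 ^ σ : ℝ≥0) * diagonalKernel d o lam σ v u := by
  unfold diagonalKernel
  split_ifs with huv hvu
  · rw [h.symm v u, ← mul_assoc]
    gcongr
    exact ennreal_rpow_neg_le_mul_rpow_neg two_ne_zero (mod_cast huv.2) hσ
  · exact absurd huv.symm hvu
  all_goals exact zero_le

lemma exists_lintegral_diagonalKernel_le (hQ : 0 < Q) (o : X) {lam : ℝ} (hlam : lam < Q) :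
    ∃ C : ℝ≥0, ∀ u, d o u ≠ 0 → ∫⁻ v, diagonalKernel d o lam (Q - lam) u v ∂μ ≤ C := by
  obtain ⟨C, hC⟩ := h.exists_setLIntegral_closedBall_le hQ hlam
  refine ⟨C * 3 ^ (Q - lam), fun u hu ↦ ?_⟩
  have hu' : (d o u : ℝ≥0∞) ≠ 0 := coe_ne_zero.2 hu
  have hball : MeasurableSet {v | d u v ≤ 3 * d o u} :=
    measurableSet_le (h.measurable_dist_left u) measurable_const
  calc ∫⁻ v, diagonalKernel d o lam (Q - lam) u v ∂μ
      ≤ ∫⁻ v in {v | d u v ≤ 3 * d o u},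
          (d o u : ℝ≥0∞) ^ (-(Q - lam)) * (d u v : ℝ≥0∞) ^ (-lam) ∂μ := by
        rw [← lintegral_indicator hball]
        refine lintegral_mono fun v ↦ ?_
        unfold diagonalKernel
        split_ifs with huv
        · rw [Set.indicator_of_mem (s := {v | d u v ≤ 3 * d o u}) (h.dist_le_three_mul huv.2)]
        · exact zero_le
    _ ≤ (d o u : ℝ≥0∞) ^ (-(Q - lam)) * (C * (3 * d o u : ℝ≥0) ^ (Q - lam)) := by
        rw [lintegral_const_mul' _ _ (rpow_ne_top_of_ne_zero hu' coe_ne_top)]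
        gcongr
        exact hC u _ (by positivity)
    _ = (C * 3 ^ (Q - lam) : ℝ≥0) := by
        rw [coe_mul 3, mul_rpow_of_ne_top coe_ne_top coe_ne_top, coe_mul,
          coe_rpow_of_ne_zero three_ne_zero, mul_left_comm, mul_left_comm (_ ^ (-(Q - lam))),
          ← rpow_add _ _ hu' coe_ne_top, neg_add_cancel, rpow_zero, mul_one]

lemma isBilinearBounded_diagonalKernel_of_add_eq_one [SFinite μ] (hQ : 0 < Q) (hs : s < 1)
    (ht : t < 1) (hst : s + t = 1) (o : X) {lam : ℝ} (hlam : lam < Q) :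
    IsBilinearBounded s t (diagonalKernel d o lam (Q - lam)) μ μ := by
  obtain ⟨C, hC⟩ := h.exists_lintegral_diagonalKernel_le hQ o hlam
  have hne := h.ae_dist_ne_zero hQ o
  have hK := h.measurable_diagonalKernel o lam (Q - lam)
  refine isBilinearBounded_of_schur (C₁ := 2 ^ (Q - lam) * C) hs.le ht.le hst.ge hK hK
    (.of_forall fun u ↦ .of_forall fun v ↦ ?_) (hne.mono fun v hv ↦ ?_) (hne.mono hC)
  · rw [← rpow_add_of_nonneg _ _ (by linarith) (by linarith), show 1 - t + (1 - s) = 1 by linarith,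
      rpow_one]
  · calc ∫⁻ u, diagonalKernel d o lam (Q - lam) u v ∂μ
        ≤ ∫⁻ u, (2 ^ (Q - lam) : ℝ≥0) * diagonalKernel d o lam (Q - lam) v u ∂μ :=
          lintegral_mono fun u ↦ h.diagonalKernel_le_swap o (by linarith) u v
      _ ≤ (2 ^ (Q - lam) * C : ℝ≥0) := by
          rw [lintegral_const_mul' _ _ coe_ne_top, coe_mul]
          gcongr
          exact hC v hv

lemma diagonalKernel_le_dist_rpow {o u v : X} {lam σ : ℝ} (hσ : 0 ≤ σ) (huv : d u v ≠ 0) :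
    diagonalKernel d o lam σ u v ≤ (3 ^ σ : ℝ≥0) * (d u v : ℝ≥0∞) ^ (-(lam + σ)) := by
  unfold diagonalKernel
  split_ifs with hcomp
  · rw [neg_add_rev, rpow_add _ _ (coe_ne_zero.2 huv) coe_ne_top, ← mul_assoc]
    gcongr
    exact ennreal_rpow_neg_le_mul_rpow_neg three_ne_zero
      (mod_cast h.dist_le_three_mul hcomp.2) hσ
  · exact zero_le

theorem isBilinearBounded_diagonalKernel [SFinite μ] (hQ : 0 < Q) (hs : s < 1) (ht : t < 1)
    (hst : 1 ≤ s + t) (o : X) {lam σ : ℝ} (hlam : lam < Q) (hσ : 0 ≤ σ)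
    (hlamσ : lam + σ = Q * (2 - s - t)) :
    IsBilinearBounded s t (diagonalKernel d o lam σ) μ μ := by
  rcases hst.eq_or_lt with hst | hst
  · obtain rfl : σ = Q - lam := by
      rw [eq_sub_iff_add_eq', hlamσ, sub_sub, ← hst]
      ring
    exact h.isBilinearBounded_diagonalKernel_of_add_eq_one hQ hs ht hst.symm o hlam
  · refine (h.isBilinearBounded_dist_rpow hQ hs ht hst).of_le_const_mul (3 ^ σ)
      (.of_forall fun u ↦ (h.ae_dist_ne_zero hQ u).mono fun v huv ↦ ?_)
    rw [← hlamσ]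
    exact h.diagonalKernel_le_dist_rpow hσ huv

lemma steinWeissKernel_swap (o : X) (lam α β : ℝ) (u v : X) :
    steinWeissKernel d o lam α β u v = steinWeissKernel d o lam β α v u := by
  rw [steinWeissKernel, steinWeissKernel, h.symm v u, mul_comm ((d o u : ℝ≥0∞) ^ _)]

lemma steinWeissKernel_le_hardyKernel {o u v : X} (lam α β : ℝ) (hu : d o u ≠ 0)
    (hvu : 2 * d o v ≤ d o u) :
    steinWeissKernel d o lam α β u v ≤ (2 ^ |lam| : ℝ≥0) * hardyKernel d o (α + lam) β u v := by
  have hvu' : d o v ≤ d o u := by linarith [(d o v).2]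
  have hud : d o u ≤ 2 * d u v := by
    have := h.triangle o v u
    rw [h.symm v u] at this
    linarith
  have hdu : d u v ≤ 2 * d o u := by
    have := h.triangle u o v
    rw [h.symm u o] at this
    linarith
  have hpow := ennreal_rpow_le_mul_rpow_of_comparable (x := d u v) (y := d o u) two_ne_zero
    (mod_cast hdu) (mod_cast hud) (-lam)
  rw [steinWeissKernel, hardyKernel, if_pos hvu', neg_add, rpow_add _ _ (coe_ne_zero.2 hu)
    coe_ne_top]
  calc _ ≤ (d o u : ℝ≥0∞) ^ (-α) * (d o v : ℝ≥0∞) ^ (-β) *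
        ((2 ^ |lam| : ℝ≥0) * (d o u : ℝ≥0∞) ^ (-lam)) := by
        rw [← abs_neg lam]
        gcongr
    _ = _ := by ring

lemma steinWeissKernel_le {o u v : X} (lam α β : ℝ) (hu : d o u ≠ 0) (hv : d o v ≠ 0) :
    steinWeissKernel d o lam α β u v ≤ (2 ^ (|lam| + |β|) : ℝ≥0) *
      (hardyKernel d o (α + lam) β u v + hardyKernel d o (β + lam) α v u +
        diagonalKernel d o lam (α + β) u v) := by
  have hlamβ : (2 ^ |lam| : ℝ≥0) ≤ 2 ^ (|lam| + |β|) :=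
    NNReal.rpow_le_rpow_of_exponent_le one_le_two (by linarith [abs_nonneg β])
  have hββ : (2 ^ |β| : ℝ≥0) ≤ 2 ^ (|lam| + |β|) :=
    NNReal.rpow_le_rpow_of_exponent_le one_le_two (by linarith [abs_nonneg lam])
  by_cases hvu : 2 * d o v ≤ d o u
  · refine (h.steinWeissKernel_le_hardyKernel lam α β hu hvu).trans ?_
    gcongr
    exact le_add_right le_self_add
  by_cases huv : 2 * d o u ≤ d o v
  · rw [h.steinWeissKernel_swap]
    refine (h.steinWeissKernel_le_hardyKernel lam β α hv huv).trans ?_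
    gcongr
    exact le_add_right le_add_self
  · refine (steinWeissKernel_le_diagonalKernel lam α β hu (not_le.1 hvu).le
      (not_le.1 huv).le).trans ?_
    gcongr
    exact le_add_self

theorem isBilinearBounded_steinWeissKernel [SFinite μ] (hQ : 0 < Q) (hs : s < 1) (ht : t < 1)
    (hst : 1 ≤ s + t) (o : X) {lam α β : ℝ} (hlam : lam < Q) (hαβ : 0 ≤ α + β)
    (hbal : lam + α + β = Q * (2 - s - t)) (hβ : β < Q * (1 - s)) (hα : α < Q * (1 - t)) :
    IsBilinearBounded s t (steinWeissKernel d o lam α β) μ μ := by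
  have hleft := h.isBilinearBounded_hardyKernel hQ hs ht hst o (α := α + lam) (by linarith) hβ
  have hright := h.isBilinearBounded_hardyKernel hQ ht hs (by linarith) o (α := β + lam) (β := α)
    (by linarith) hα
  have hdiag := h.isBilinearBounded_diagonalKernel hQ hs ht hst o hlam hαβ (by linarith)
  have hmeas := h.measurable_hardyKernel o (α + lam) β
  have hmeas' := h.measurable_hardyKernel o (β + lam) α
  have hne := h.ae_dist_ne_zero hQ o
  refine ((hleft.add hmeas (hright.swap hmeas')).add
    (hmeas.add (hmeas'.comp measurable_swap)) hdiag).of_le_const_mul (2 ^ (|lam| + |β|)) ?_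
  filter_upwards [hne] with u hu
  filter_upwards [hne] with v hv
  exact h.steinWeissKernel_le lam α β hu hv

end SteinWeiss

section Tail

variable (h : IsUpperRegular d Q μ)
include h

lemma measurable_steinWeissKernel (o : X) (lam α β : ℝ) :
    Measurable (Function.uncurry (steinWeissKernel d o lam α β)) := by
  have hN := h.measurable_dist_left o
  have hd := h.measurable_dist_rpow (-lam)
  exact (Measurable.mul (by fun_prop) (by fun_prop)).mul hd

lemma lintegral_steinWeissKernel_mul_le (hQ : 0 < Q) {o u : X} (lam α β : ℝ) {η : ℝ} (hη : 0 ≤ η)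
    {c R : ℝ≥0} (hc0 : c ≠ 0) (hc : 2 * c ≤ 1) (hu : d o u ≠ 0) (hRu : R ≤ c * d o u)
    {f : X → ℝ≥0∞} (hf : AEMeasurable f μ) :
    ∫⁻ v, steinWeissKernel d o lam α β u v * f v ∂μ ≤
      (2 ^ |lam| * c ^ η : ℝ≥0) * ∫⁻ v, hardyKernel d o (α + lam - η) (β + η) u v * f v ∂μ +
        ∫⁻ v, steinWeissKernel d o lam α β u v * {v | R ≤ d o v}.indicator f v ∂μ := by
  have hH : AEMeasurable (fun v ↦ hardyKernel d o (α + lam - η) (β + η) u v * f v) μ :=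
    (h.measurable_hardyKernel o _ _).of_uncurry_left.aemeasurable.mul hf
  rw [← lintegral_const_mul' _ _ coe_ne_top, ← lintegral_add_left' (hH.const_mul _)]
  refine lintegral_mono_ae ((h.ae_dist_ne_zero hQ o).mono fun v hv ↦ ?_)
  rcases le_or_gt R (d o v) with hRv | hvR
  · rw [Set.indicator_of_mem (s := {v | R ≤ d o v}) hRv]
    exact le_add_self
  have hvu : d o v ≤ c * d o u := hvR.le.trans hRu
  have hvu2 : 2 * d o v ≤ d o u := by nlinarith [(d o u).2]
  calc steinWeissKernel d o lam α β u v * f v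
      ≤ (2 ^ |lam| : ℝ≥0) * ((c ^ η : ℝ≥0) * hardyKernel d o (α + lam - η) (β + η) u v) * f v := by
        gcongr
        refine (h.steinWeissKernel_le_hardyKernel lam α β hu hvu2).trans ?_
        gcongr
        exact hardyKernel_le_of_le_mul hc0 hu hv hvu _ _ hη
    _ = (2 ^ |lam| * c ^ η : ℝ≥0) * (hardyKernel d o (α + lam - η) (β + η) u v * f v) := by
        rw [coe_mul]
        ring
    _ ≤ _ := le_self_add

lemma eLpNorm_lintegral_steinWeissKernel_mul_le [SFinite μ] (hQ : 0 < Q) (o : X) (lam α β : ℝ)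
    {η : ℝ} (hη : 0 ≤ η) {c : ℝ≥0} (hc0 : c ≠ 0) (hc : 2 * c ≤ 1) (R : ℝ≥0) {f : X → ℝ≥0∞}
    (hf : AEMeasurable f μ) {p : ℝ≥0∞} (hp : 1 ≤ p) :
    eLpNorm (fun u ↦ ∫⁻ v, steinWeissKernel d o lam α β u v * f v ∂μ) p
        (μ.restrict {u | R ≤ c * d o u}) ≤
      (2 ^ |lam| * c ^ η : ℝ≥0) *
          eLpNorm (fun u ↦ ∫⁻ v, hardyKernel d o (α + lam - η) (β + η) u v * f v ∂μ) p μ +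
        eLpNorm (fun u ↦ ∫⁻ v, steinWeissKernel d o lam α β u v *
          {v | R ≤ d o v}.indicator f v ∂μ) p μ := by
  have hN := h.measurable_dist_left o
  set near := fun u ↦ ∫⁻ v, hardyKernel d o (α + lam - η) (β + η) u v * f v ∂μ
  set far := fun u ↦ ∫⁻ v, steinWeissKernel d o lam α β u v * {v | R ≤ d o v}.indicator f v ∂μ
  have hnear : AEMeasurable near μ := ((h.measurable_hardyKernel o _ _).aemeasurable.mul
    hf.comp_snd).lintegral_prod_right
  have hfar : AEMeasurable far μ := ((h.measurable_steinWeissKernel o _ _ _).aemeasurable.mul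
    (hf.indicator (measurableSet_le measurable_const hN)).comp_snd).lintegral_prod_right
  calc eLpNorm (fun u ↦ ∫⁻ v, steinWeissKernel d o lam α β u v * f v ∂μ) p
        (μ.restrict {u | R ≤ c * d o u})
      ≤ eLpNorm ((2 ^ |lam| * c ^ η : ℝ≥0) • near + far) p (μ.restrict {u | R ≤ c * d o u}) := by
        refine eLpNorm_mono_enorm_ae ?_
        filter_upwards [ae_restrict_of_ae (h.ae_dist_ne_zero hQ o), ae_restrict_mem
          (measurableSet_le measurable_const (hN.const_mul c))] with u hu hRu
        exact h.lintegral_steinWeissKernel_mul_le hQ lam α β hη hc0 hc hu hRu hf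
    _ ≤ eLpNorm ((2 ^ |lam| * c ^ η : ℝ≥0) • near + far) p μ := eLpNorm_restrict_le _ _ _ _
    _ ≤ eLpNorm ((2 ^ |lam| * c ^ η : ℝ≥0) • near) p μ + eLpNorm far p μ :=
        eLpNorm_add_le (hnear.const_smul _).aestronglyMeasurable hfar.aestronglyMeasurable hp
    _ ≤ _ := by
        gcongr
        exact eLpNorm_le_nnreal_smul_eLpNorm_of_ae_le_mul' (.of_forall fun u ↦ le_rfl) p

theorem exists_eLpNorm_lintegral_steinWeissKernel_mul_le [SigmaFinite μ] (hQ : 0 < Q) (hs : s < 1)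
    (ht : t < 1) (hst : 1 ≤ s + t) (o : X) {lam α β : ℝ} (hlam : lam < Q) (hαβ : 0 ≤ α + β)
    (hbal : lam + α + β = Q * (2 - s - t)) (hβ : β < Q * (1 - s)) (hα : α < Q * (1 - t)) :
    ∃ C : ℝ≥0, ∃ η : ℝ, 0 < η ∧ ∀ A δ c R : ℝ≥0, A ≠ 0 → δ ≠ 0 → c ≠ 0 → 2 * c ≤ 1 →
      ∀ f : X → ℝ≥0∞, AEMeasurable f μ → eLpNorm f (.ofReal s⁻¹) μ ≤ A →
        eLpNorm f (.ofReal s⁻¹) (μ.restrict {v | R ≤ d o v}) ≤ δ →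
          eLpNorm (fun u ↦ ∫⁻ v, steinWeissKernel d o lam α β u v * f v ∂μ) (.ofReal (1 - t)⁻¹)
            (μ.restrict {u | R ≤ c * d o u}) ≤ (C * (c ^ η * A + δ) : ℝ≥0) := by
  have hs0 : 0 < s := by linarith
  have ht0 : 0 < t := by linarith
  have hexp : 1 ≤ ENNReal.ofReal (1 - t)⁻¹ :=
    one_le_ofReal.2 ((one_le_inv₀ (by linarith)).2 (by linarith))
  obtain ⟨η, hη, hηβ⟩ : ∃ η > 0, β + η < Q * (1 - s) :=
    ⟨(Q * (1 - s) - β) / 2, by linarith, by linarith⟩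
  obtain ⟨C₁, hC₁⟩ := (h.isBilinearBounded_hardyKernel hQ hs ht hst o (α := α + lam - η)
    (β := β + η) (by linarith) hηβ).exists_eLpNorm_lintegral_le hs0 ht0.le ht
  obtain ⟨C₂, hC₂⟩ := (h.isBilinearBounded_steinWeissKernel hQ hs ht hst o hlam hαβ hbal hβ
    hα).exists_eLpNorm_lintegral_le hs0 ht0.le ht
  refine ⟨2 ^ |lam| * C₁ + C₂, η, hη, fun A δ c R hA hδ hc0 hc f hf hfA hfδ ↦ ?_⟩
  have hfar : MeasurableSet {v | R ≤ d o v} :=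
    measurableSet_le measurable_const (h.measurable_dist_left o)
  rw [← eLpNorm_indicator_eq_eLpNorm_restrict hfar] at hfδ
  calc _ ≤ _ := h.eLpNorm_lintegral_steinWeissKernel_mul_le hQ o lam α β hη.le hc0 hc R hf hexp
    _ ≤ (2 ^ |lam| * c ^ η : ℝ≥0) * (C₁ * A) + C₂ * δ := by
        gcongr
        · exact hC₁ A hA f hf hfA
        · exact hC₂ δ hδ _ (hf.indicator hfar) hfδ
    _ ≤ _ := by
        norm_cast
        have : 0 ≤ 2 ^ |lam| * C₁ * δ + C₂ * (c ^ η * A) := zero_le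
        linarith

theorem exists_eLpNorm_lintegral_steinWeissKernel_mul_tail_le [SigmaFinite μ] (hQ : 0 < Q)
    (hs : s < 1) (ht : t < 1) (hst : 1 ≤ s + t) (o : X) {lam α β : ℝ} (hlam : lam < Q)
    (hαβ : 0 ≤ α + β) (hbal : lam + α + β = Q * (2 - s - t)) (hβ : β < Q * (1 - s))
    (hα : α < Q * (1 - t)) {ι : Type*} {f : ι → X → ℝ≥0∞} (hf : ∀ i, AEMeasurable (f i) μ)
    {A : ℝ≥0} (hfA : ∀ i, eLpNorm (f i) (.ofReal s⁻¹) μ ≤ A)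
    (htight : ∀ δ : ℝ≥0, δ ≠ 0 → ∃ R : ℝ≥0, ∀ i,
      eLpNorm (f i) (.ofReal s⁻¹) (μ.restrict {v | R ≤ d o v}) ≤ δ)
    {ε : ℝ≥0} (hε : ε ≠ 0) :
    ∃ M : ℝ≥0, ∀ i, eLpNorm (fun u ↦ ∫⁻ v, steinWeissKernel d o lam α β u v * f i v ∂μ)
      (.ofReal (1 - t)⁻¹) (μ.restrict {u | M ≤ d o u}) ≤ ε := by
  obtain ⟨C, η, hη, hC⟩ := h.exists_eLpNorm_lintegral_steinWeissKernel_mul_le hQ hs ht hst o hlam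
    hαβ hbal hβ hα
  have hε₀ : 0 < ε / (2 * (C + 1)) := by positivity
  obtain ⟨R, hR⟩ := htight _ hε₀.ne'
  obtain ⟨c, hc0, hc2, hcA⟩ : ∃ c : ℝ≥0, 0 < c ∧ 2 * c ≤ 1 ∧
      c ^ η * (A + 1) ≤ ε / (2 * (C + 1)) := by
    let m := ε / (2 * (C + 1)) / (A + 1)
    have hm : 0 < m := by positivity
    refine ⟨min 2⁻¹ (m ^ η⁻¹), lt_min (by positivity) (NNReal.rpow_pos hm), ?_, ?_⟩
    · exact (mul_le_mul_right (min_le_left _ _) 2).trans_eq (by simp)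
    · rw [← le_div_iff₀ (by positivity), ← NNReal.le_rpow_inv_iff hη]
      exact min_le_right _ _
  refine ⟨R / c, fun i ↦ ?_⟩
  have hset : {u | R / c ≤ d o u} = {u | R ≤ c * d o u} := by
    ext u
    exact div_le_iff₀' hc0
  rw [hset]
  refine (hC (A + 1) _ c R (by positivity) hε₀.ne' hc0.ne' hc2 (f i) (hf i) ((hfA i).trans
    (mod_cast le_self_add)) (hR i)).trans (coe_le_coe.2 ?_)
  calc C * (c ^ η * (A + 1) + ε / (2 * (C + 1)))
      ≤ (C + 1) * (ε / (2 * (C + 1)) + ε / (2 * (C + 1))) := by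
        gcongr
        exact le_self_add
    _ = ε := by
        field_simp
        norm_num

end Tail

end IsUpperRegular

section Heisenberg

variable {n : ℕ}

lemma znorm_nonneg (z : Fin n → ℂ) : 0 ≤ znorm z := Real.sqrt_nonneg _

lemma sq_znorm (z : Fin n → ℂ) : znorm z ^ 2 = ∑ j, Complex.normSq (z j) :=
  Real.sq_sqrt (Finset.sum_nonneg fun _ _ ↦ Complex.normSq_nonneg _)

lemma norm_apply_le_znorm (z : Fin n → ℂ) (j : Fin n) : ‖z j‖ ≤ znorm z := by
  refine Real.le_sqrt_of_sq_le ?_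
  rw [← Complex.normSq_eq_norm_sq]
  exact Finset.single_le_sum (f := fun j ↦ Complex.normSq (z j))
    (fun _ _ ↦ Complex.normSq_nonneg _) (Finset.mem_univ j)

lemma norm_sum_mul_conj_le (z w : Fin n → ℂ) :
    ‖∑ j, z j * (starRingEnd ℂ) (w j)‖ ≤ znorm z * znorm w := by
  calc ‖∑ j, z j * (starRingEnd ℂ) (w j)‖
      ≤ ∑ j, ‖z j‖ * ‖w j‖ := by
        refine (norm_sum_le _ _).trans_eq ?_
        simp only [norm_mul, RCLike.norm_conj]
    _ ≤ znorm z * znorm w := by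
        simpa only [znorm, Complex.normSq_eq_norm_sq] using
          Real.sum_mul_le_sqrt_mul_sqrt Finset.univ (fun j ↦ ‖z j‖) (fun j ↦ ‖w j‖)

lemma Hnorm_nonneg (u : Hn n) : 0 ≤ Hnorm u := by
  unfold Hnorm
  positivity

lemma Hnorm_pow_four (u : Hn n) : Hnorm u ^ 4 = znorm u.1 ^ 4 + u.2 ^ 2 := by
  rw [Hnorm, ← Real.rpow_natCast, ← Real.rpow_mul (by positivity)]
  norm_num

lemma znorm_le_Hnorm (u : Hn n) : znorm u.1 ≤ Hnorm u := by
  rw [← pow_le_pow_iff_left₀ (znorm_nonneg _) (Hnorm_nonneg u) four_ne_zero, Hnorm_pow_four]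
  linarith [sq_nonneg u.2]

lemma abs_snd_le_sq_Hnorm (u : Hn n) : |u.2| ≤ Hnorm u ^ 2 := by
  rw [← pow_le_pow_iff_left₀ (abs_nonneg _) (by positivity) two_ne_zero, ← pow_mul, sq_abs,
    Hnorm_pow_four]
  linarith [pow_nonneg (znorm_nonneg u.1) 4]

/-- The complex gauge `|z|² + i t`. Its modulus is the square of the homogeneous norm, and it is
additive up to twice the Hermitian product, so that the triangle inequality for the homogeneous
norm reduces to the Cauchy–Schwarz inequality. -/
def Hgauge (u : Hn n) : ℂ := ⟨znorm u.1 ^ 2, u.2⟩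

lemma norm_Hgauge (u : Hn n) : ‖Hgauge u‖ = Hnorm u ^ 2 := by
  rw [← pow_left_inj₀ (norm_nonneg _) (by positivity) two_ne_zero, ← pow_mul, Hnorm_pow_four,
    Complex.sq_norm, Complex.normSq_apply, Hgauge]
  ring

lemma Hgauge_Hmul (u v : Hn n) :
    Hgauge (Hmul u v) =
      Hgauge u + Hgauge v + 2 * ∑ j, u.1 j * (starRingEnd ℂ) (v.1 j) := by
  apply Complex.ext
  · simp [Hgauge, Hmul, sq_znorm, Complex.normSq_add, Finset.sum_add_distrib, Finset.mul_sum]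
  · simp [Hgauge, Hmul]

theorem Hnorm_Hmul_le (u v : Hn n) : Hnorm (Hmul u v) ≤ Hnorm u + Hnorm v := by
  refine le_of_sq_le_sq ?_ (add_nonneg (Hnorm_nonneg u) (Hnorm_nonneg v))
  have hHermitian : ‖∑ j, u.1 j * (starRingEnd ℂ) (v.1 j)‖ ≤ Hnorm u * Hnorm v :=
    (norm_sum_mul_conj_le u.1 v.1).trans (mul_le_mul (znorm_le_Hnorm u) (znorm_le_Hnorm v)
      (znorm_nonneg _) (Hnorm_nonneg u))
  calc Hnorm (Hmul u v) ^ 2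
      ≤ ‖Hgauge u‖ + ‖Hgauge v‖ + ‖2 * ∑ j, u.1 j * (starRingEnd ℂ) (v.1 j)‖ := by
        rw [← norm_Hgauge, Hgauge_Hmul]
        exact norm_add₃_le
    _ ≤ Hnorm u ^ 2 + Hnorm v ^ 2 + 2 * (Hnorm u * Hnorm v) := by
        rw [norm_mul, Complex.norm_two, norm_Hgauge, norm_Hgauge]
        gcongr
    _ = (Hnorm u + Hnorm v) ^ 2 := by ring

lemma Hnorm_Hinv (u : Hn n) : Hnorm (Hinv u) = Hnorm u := by simp [Hnorm, Hinv, znorm]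

lemma im_sum_mul_conj_swap (z w : Fin n → ℂ) :
    (∑ j, z j * (starRingEnd ℂ) (w j)).im = -(∑ j, w j * (starRingEnd ℂ) (z j)).im := by
  rw [← Complex.conj_im, map_sum]
  simp only [map_mul, Complex.conj_conj, mul_comm]

lemma Hinv_Hmul_Hinv (u v : Hn n) : Hinv (Hmul (Hinv u) v) = Hmul (Hinv v) u := by
  refine Prod.ext (by simp [Hmul, Hinv]) ?_
  simp only [Hmul, Hinv, Pi.neg_apply, neg_mul, Finset.sum_neg_distrib, Complex.neg_im]
  rw [im_sum_mul_conj_swap v.1 u.1]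
  ring

lemma Hmul_Hinv_Hmul_Hmul_Hinv (u v w : Hn n) :
    Hmul (Hmul (Hinv u) v) (Hmul (Hinv v) w) = Hmul (Hinv u) w := by
  refine Prod.ext (by simp [Hmul, Hinv]) ?_
  simp only [Hmul, Hinv, Pi.neg_apply, Pi.add_apply, map_add, map_neg, add_mul, mul_add, neg_mul,
    mul_neg, Finset.sum_add_distrib, Finset.sum_neg_distrib, Complex.neg_im, Complex.add_im]
  linarith [im_sum_mul_conj_swap v.1 v.1]

lemma Hdist_nonneg (u v : Hn n) : 0 ≤ Hdist u v := Hnorm_nonneg _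

lemma Hdist_comm (u v : Hn n) : Hdist u v = Hdist v u := by
  rw [Hdist, ← Hnorm_Hinv, Hinv_Hmul_Hinv, Hdist]

lemma Hdist_triangle (u v w : Hn n) : Hdist u w ≤ Hdist u v + Hdist v w := by
  rw [Hdist, ← Hmul_Hinv_Hmul_Hmul_Hinv u v w]
  exact Hnorm_Hmul_le _ _

lemma Hdist_zero_left (v : Hn n) : Hdist 0 v = Hnorm v := by simp [Hdist, Hmul, Hinv]

lemma continuous_Hnorm : Continuous (Hnorm : Hn n → ℝ) := by
  unfold Hnorm znorm
  have := Complex.continuous_normSq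
  fun_prop (disch := norm_num)

lemma continuous_uncurry_Hmul : Continuous (Function.uncurry (Hmul : Hn n → Hn n → Hn n)) := by
  unfold Hmul Function.uncurry
  fun_prop

lemma continuous_uncurry_Hdist : Continuous (Function.uncurry (Hdist : Hn n → Hn n → ℝ)) :=
  continuous_Hnorm.comp (continuous_uncurry_Hmul.comp
    ((by unfold Hinv; fun_prop : Continuous (Hinv : Hn n → Hn n)).prodMap continuous_id))

lemma measurePreserving_Hmul (u : Hn n) : MeasurePreserving (Hmul u) := by
  have hHmul : Hmul u =
      fun v ↦ (u.1 + v.1, u.2 + 2 * (∑ j, u.1 j * (starRingEnd ℂ) (v.1 j)).im + v.2) :=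
    funext fun v ↦ Prod.ext rfl (add_right_comm _ _ _)
  rw [hHmul]
  exact (measurePreserving_add_left volume u.1).skew_product
    (g := fun z t ↦ u.2 + 2 * (∑ j, u.1 j * (starRingEnd ℂ) (z j)).im + t)
    (Continuous.measurable (by unfold Function.uncurry; fun_prop))
    (.of_forall fun z ↦ map_add_left_eq_self _ _)

lemma volume_Hnorm_le_le (r : ℝ≥0) : volume {w : Hn n | Hnorm w ≤ r} ≤
    (2 * NNReal.pi ^ n : ℝ≥0) * (r : ℝ≥0∞) ^ (2 * n + 2 : ℝ) := by
  have hsub : {w : Hn n | Hnorm w ≤ r} ⊆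
      (Set.univ.pi fun _ ↦ Metric.closedBall 0 r) ×ˢ Set.Icc (-(r : ℝ) ^ 2) (r ^ 2) := by
    intro w (hw : Hnorm w ≤ r)
    refine ⟨fun j _ ↦ ?_, abs_le.1 ?_⟩
    · rw [mem_closedBall_zero_iff]
      exact (norm_apply_le_znorm w.1 j).trans ((znorm_le_Hnorm w).trans hw)
    · exact (abs_snd_le_sq_Hnorm w).trans (pow_le_pow_left₀ (Hnorm_nonneg w) hw 2)
  refine (measure_mono hsub).trans_eq ?_
  have hpow : (r : ℝ≥0∞) ^ (2 * n + 2 : ℝ) = (r : ℝ≥0∞) ^ (2 * n + 2) := by norm_cast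
  have hlength : ENNReal.ofReal ((r : ℝ) ^ 2 - -(r : ℝ) ^ 2) = 2 * (r : ℝ≥0∞) ^ 2 := by
    rw [sub_neg_eq_add, ← two_mul, ofReal_mul zero_le_two, ofReal_pow r.coe_nonneg,
      ofReal_coe_nnreal, ofReal_ofNat]
  rw [Measure.volume_eq_prod, Measure.prod_prod, volume_pi_pi, Real.volume_Icc, hlength, hpow]
  simp only [Complex.volume_closedBall, Finset.prod_const, Finset.card_univ, Fintype.card_fin,
    ofReal_coe_nnreal]
  push_cast
  ring

/-- The distance `Hdist` with its nonnegativity recorded in the type. -/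
def Hnndist (u v : Hn n) : ℝ≥0 := ⟨Hdist u v, Hdist_nonneg u v⟩

theorem isUpperRegular_Hnndist :
    IsUpperRegular (Hnndist : Hn n → Hn n → ℝ≥0) (2 * n + 2) volume where
  measurable_dist := continuous_uncurry_Hdist.measurable.subtype_mk
  symm u v := Subtype.ext (Hdist_comm u v)
  triangle u v w := Hdist_triangle u v w
  exists_measure_le := by
    refine ⟨2 * NNReal.pi ^ n, fun u r ↦ ?_⟩
    calc volume {v | Hnndist u v ≤ r} = volume {w : Hn n | Hnorm w ≤ r} :=
          (measurePreserving_Hmul (Hinv u)).measure_preimage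
            (continuous_Hnorm.measurable measurableSet_Iic).nullMeasurableSet
      _ ≤ _ := volume_Hnorm_le_le r

end Heisenberg

section Potential

lemma enorm_coe_rpow {x : ℝ≥0} (hx : x ≠ 0) (γ : ℝ) : ‖(x : ℝ) ^ γ‖ₑ = (x : ℝ≥0∞) ^ γ := by
  rw [← NNReal.coe_rpow, ← coe_rpow_of_ne_zero hx]
  exact Real.enorm_eq_ofReal (NNReal.coe_nonneg _) |>.trans (ofReal_coe_nnreal ..)

lemma eLpNorm_restrict_compl_le_of_one_sub_le {X E : Type*} [MeasurableSpace X]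
    [NormedAddCommGroup E] {μ : Measure X} {f : X → E} {p : ℝ} (hp : 0 < p) {S : Set X}
    (hS : MeasurableSet S) {δ : ℝ≥0∞} (hf : eLpNorm f (.ofReal p) μ ≤ 1)
    (hfS : 1 - δ ^ p ≤ ∫⁻ x in S, ‖f x‖ₑ ^ p ∂μ) :
    eLpNorm f (.ofReal p) (μ.restrict Sᶜ) ≤ δ := by
  have hp0 : ENNReal.ofReal p ≠ 0 := (ofReal_pos.2 hp).ne'
  rw [eLpNorm_eq_lintegral_rpow_enorm_toReal hp0 ofReal_ne_top, toReal_ofReal hp.le,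
    one_div, rpow_inv_le_iff hp] at hf ⊢
  rw [one_rpow] at hf
  have hadd := lintegral_add_compl (μ := μ) (fun x ↦ ‖f x‖ₑ ^ p) hS
  have hfin : ∫⁻ x in S, ‖f x‖ₑ ^ p ∂μ ≠ ∞ :=
    ((setLIntegral_le_lintegral _ _).trans hf).trans_lt one_lt_top |>.ne
  refine ENNReal.le_of_add_le_add_left hfin ?_
  calc _ ≤ 1 := hadd.trans_le hf
    _ ≤ _ := tsub_le_iff_right.1 hfS

variable {n : ℕ}

lemma coe_Hnndist_zero_left (v : Hn n) : (Hnndist 0 v : ℝ) = Hnorm v := Hdist_zero_left v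

lemma compl_Hball_zero (R : ℝ) : (Hball (0 : Hn n) R)ᶜ = {v | R.toNNReal ≤ Hnndist 0 v} := by
  ext v
  exact not_lt.trans (Real.toNNReal_le_iff_le_coe (p := Hnndist 0 v)).symm

lemma measurableSet_Hball (u : Hn n) (R : ℝ) : MeasurableSet (Hball u R) :=
  continuous_uncurry_Hdist.measurable.of_uncurry_left measurableSet_Iio

lemma enorm_div_Hdist_rpow_eq {u v : Hn n} (g : Hn n → ℝ) (lam β : ℝ) (hv : Hnndist 0 v ≠ 0)
    (huv : Hnndist u v ≠ 0) :
    ‖g v / Hdist u v ^ lam‖ₑ =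
      (Hnndist 0 v : ℝ≥0∞) ^ (-β) * (Hnndist u v : ℝ≥0∞) ^ (-lam) * ‖g v * Hnorm v ^ β‖ₑ := by
  have hdist : ‖Hdist u v ^ (-lam)‖ₑ = (Hnndist u v : ℝ≥0∞) ^ (-lam) := enorm_coe_rpow huv _
  have hcancel : (Hnndist 0 v : ℝ≥0∞) ^ (-β) * (Hnndist 0 v : ℝ≥0∞) ^ β = 1 := by
    rw [← rpow_add _ _ (coe_ne_zero.2 hv) coe_ne_top, neg_add_cancel, rpow_zero]
  rw [div_eq_mul_inv, ← Real.rpow_neg (Hdist_nonneg u v), enorm_mul, enorm_mul, hdist,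
    ← coe_Hnndist_zero_left, enorm_coe_rpow hv, mul_right_comm, mul_left_comm, hcancel,
    mul_one]

lemma enorm_Ilam_mul_Hnorm_rpow_le {u : Hn n} (hu : Hnndist 0 u ≠ 0) (g : Hn n → ℝ)
    (lam α β : ℝ) :
    ‖Ilam lam g u * Hnorm u ^ (-α)‖ₑ ≤
      ∫⁻ v, steinWeissKernel Hnndist 0 lam α β u v * ‖g v * Hnorm v ^ β‖ₑ := by
  have hne (w : Hn n) : ∀ᵐ v, Hnndist w v ≠ 0 :=
    isUpperRegular_Hnndist.ae_dist_ne_zero (by positivity) w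
  calc ‖Ilam lam g u * Hnorm u ^ (-α)‖ₑ
      ≤ (∫⁻ v, ‖g v / Hdist u v ^ lam‖ₑ) * (Hnndist 0 u : ℝ≥0∞) ^ (-α) := by
        rw [enorm_mul, ← coe_Hnndist_zero_left, enorm_coe_rpow hu]
        gcongr
        exact enorm_integral_le_lintegral_enorm _
    _ = ∫⁻ v, ‖g v / Hdist u v ^ lam‖ₑ * (Hnndist 0 u : ℝ≥0∞) ^ (-α) :=
        (lintegral_mul_const' _ _ (rpow_ne_top_of_ne_zero (coe_ne_zero.2 hu) coe_ne_top)).symm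
    _ = ∫⁻ v, steinWeissKernel Hnndist 0 lam α β u v * ‖g v * Hnorm v ^ β‖ₑ := by
        refine lintegral_congr_ae ?_
        filter_upwards [hne 0, hne u] with v hv huv
        rw [enorm_div_Hdist_rpow_eq g lam β hv huv, steinWeissKernel]
        ring

lemma ofReal_abs_rpow_mul_Hnorm_rpow (x : ℝ) (v : Hn n) {p : ℝ} (hp : 0 ≤ p) (β : ℝ) :
    ENNReal.ofReal (|x| ^ p * Hnorm v ^ (β * p)) = ‖x * Hnorm v ^ β‖ₑ ^ p := by
  have hpow : 0 ≤ Hnorm v ^ β := Real.rpow_nonneg (Hnorm_nonneg v) β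
  rw [Real.rpow_mul (Hnorm_nonneg v), ← Real.mul_rpow (abs_nonneg x) hpow,
    Real.enorm_eq_ofReal_abs, abs_mul, abs_of_nonneg hpow,
    ofReal_rpow_of_nonneg (by positivity) hp]

lemma exists_eLpNorm_restrict_compl_Hball_le {ι : Type*} {g : ι → Hn n → ℝ} {p β : ℝ} (hp : 0 < p)
    (hnorm : ∀ i, eLpNorm (fun v ↦ g i v * Hnorm v ^ β) (.ofReal p) volume ≤ 1)
    (htight : ∀ δ : ℝ, 0 < δ → ∃ R : ℝ, 0 < R ∧ ∀ i, 1 - ENNReal.ofReal δ ≤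
      ∫⁻ v in Hball (0 : Hn n) R, ENNReal.ofReal (|g i v| ^ p * Hnorm v ^ (β * p)))
    {δ : ℝ} (hδ : 0 < δ) :
    ∃ R : ℝ, ∀ i, eLpNorm (fun v ↦ g i v * Hnorm v ^ β) (.ofReal p)
      (volume.restrict (Hball 0 R)ᶜ) ≤ .ofReal δ := by
  obtain ⟨R, -, hR⟩ := htight (δ ^ p) (by positivity)
  refine ⟨R, fun i ↦ eLpNorm_restrict_compl_le_of_one_sub_le hp (measurableSet_Hball 0 R)
    (hnorm i) ?_⟩
  simpa only [ofReal_rpow_of_pos hδ, ofReal_abs_rpow_mul_Hnorm_rpow _ _ hp.le] using hR i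

theorem exists_eLpNorm_Ilam_mul_Hnorm_rpow_tail_le {ι : Type*} {s t lam α β : ℝ} (hs : s < 1)
    (ht : t < 1) (hst : 1 ≤ s + t) (hlam : lam < 2 * n + 2) (hαβ : 0 ≤ α + β)
    (hbal : lam + α + β = (2 * n + 2) * (2 - s - t)) (hβ : β < (2 * n + 2) * (1 - s))
    (hα : α < (2 * n + 2) * (1 - t)) {g : ι → Hn n → ℝ} (hmeas : ∀ i, AEMeasurable (g i))
    {A : ℝ≥0} (hbound : ∀ i, eLpNorm (fun v ↦ g i v * Hnorm v ^ β) (.ofReal s⁻¹) volume ≤ A)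
    (htight : ∀ δ : ℝ, 0 < δ → ∃ R : ℝ, ∀ i,
      eLpNorm (fun v ↦ g i v * Hnorm v ^ β) (.ofReal s⁻¹)
        (volume.restrict (Hball (0 : Hn n) R)ᶜ) ≤ .ofReal δ)
    {ε : ℝ} (hε : 0 < ε) :
    ∃ M : ℝ, 0 < M ∧ ∀ i, eLpNorm (fun u ↦ Ilam lam (g i) u * Hnorm u ^ (-α)) (.ofReal (1 - t)⁻¹)
      (volume.restrict (Hball (0 : Hn n) M)ᶜ) ≤ .ofReal ε := by
  have hreg := isUpperRegular_Hnndist (n := n)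
  have hQ : (0 : ℝ) < 2 * n + 2 := by positivity
  have hf (i : ι) : AEMeasurable (fun v ↦ ‖g i v * Hnorm v ^ β‖ₑ) :=
    ((hmeas i).mul (continuous_Hnorm.measurable.pow_const β).aemeasurable).enorm
  have htight' (δ : ℝ≥0) (hδ : δ ≠ 0) : ∃ R : ℝ≥0, ∀ i,
      eLpNorm (fun v ↦ ‖g i v * Hnorm v ^ β‖ₑ) (.ofReal s⁻¹)
        (volume.restrict {v | R ≤ Hnndist 0 v}) ≤ δ := by
    obtain ⟨R, hR⟩ := htight δ (by positivity)
    refine ⟨R.toNNReal, fun i ↦ ?_⟩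
    simpa only [← compl_Hball_zero, eLpNorm_enorm, ofReal_coe_nnreal] using hR i
  obtain ⟨M, hM⟩ := hreg.exists_eLpNorm_lintegral_steinWeissKernel_mul_tail_le hQ hs ht hst 0
    hlam hαβ hbal hβ hα hf (fun i ↦ (eLpNorm_enorm _).trans_le (hbound i)) htight'
    (Real.toNNReal_pos.2 hε).ne'
  have hsub : (Hball (0 : Hn n) (M + 1))ᶜ ⊆ {u | M ≤ Hnndist 0 u} := by
    intro u (hu : ¬Hdist 0 u < M + 1)
    exact NNReal.coe_le_coe.1 ((le_add_of_nonneg_right zero_le_one).trans (not_lt.1 hu))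
  refine ⟨M + 1, by positivity, fun i ↦ ?_⟩
  calc _ ≤ eLpNorm (fun u ↦ Ilam lam (g i) u * Hnorm u ^ (-α)) (.ofReal (1 - t)⁻¹)
        (volume.restrict {u | M ≤ Hnndist 0 u}) :=
        eLpNorm_mono_measure _ (Measure.restrict_mono_set _ hsub)
    _ ≤ _ := eLpNorm_mono_enorm_ae (ae_restrict_of_ae ((hreg.ae_dist_ne_zero hQ 0).mono
        fun u hu ↦ enorm_Ilam_mul_Hnorm_rpow_le hu (g i) lam α β))
    _ ≤ _ := hM i

end Potential

theorem weighted_potential_uniform_tightness_general {ι : Type*} (n : ℕ)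
    (Q p p' q q' lam α β : ℝ) (hQ : Q = 2 * n + 2) (hp : 1 < p) (hq' : 1 < q')
    (hq : 1 / q + 1 / q' = 1) (hp' : 1 / p + 1 / p' = 1) (hlamQ : lam < Q)
    (hab : 0 ≤ α + β) (habQ : lam + α + β ≤ Q) (hβ : β < Q / p') (hα : α < Q / q)
    (hbal : 1 / p + 1 / q' + (lam + α + β) / Q = 2) (g : ι → Hn n → ℝ)
    (hmeas : ∀ i, AEMeasurable (g i)) (A : ℝ≥0)
    (hbound : ∀ i, eLpNorm (fun v ↦ g i v * Hnorm v ^ β) (ENNReal.ofReal p) volume ≤ A)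
    (htight : ∀ δ : ℝ, 0 < δ → ∃ R : ℝ, ∀ i,
      eLpNorm (fun v ↦ g i v * Hnorm v ^ β) (ENNReal.ofReal p)
        (volume.restrict (Hball (0 : Hn n) R)ᶜ) ≤ ENNReal.ofReal δ)
    (ε : ℝ) (hε : 0 < ε) :
    ∃ M : ℝ, 0 < M ∧ ∀ i,
      eLpNorm (fun u ↦ Ilam lam (g i) u * Hnorm u ^ (-α)) (ENNReal.ofReal q)
        (volume.restrict (Hball (0 : Hn n) M)ᶜ) ≤ ENNReal.ofReal ε := by
  subst hQ
  have hQ0 : (0 : ℝ) < 2 * n + 2 := by positivity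
  have hs : 1 / p < 1 := (div_lt_one (by linarith)).2 hp
  have ht : 1 / q' < 1 := (div_lt_one (by linarith)).2 hq'
  have hst : 1 ≤ 1 / p + 1 / q' := by linarith [(div_le_one hQ0).2 habQ]
  have hs' : 1 - 1 / p = 1 / p' := by linarith
  have ht' : 1 - 1 / q' = 1 / q := by linarith
  have hbal' : lam + α + β = (2 * n + 2) * (2 - 1 / p - 1 / q') := by
    rw [mul_comm, ← div_eq_iff hQ0.ne']
    linarith
  have htail := exists_eLpNorm_Ilam_mul_Hnorm_rpow_tail_le (A := A) hs ht hst hlamQ hab hbal'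
    (by rwa [hs', mul_one_div]) (by rwa [ht', mul_one_div]) hmeas
  rw [ht', one_div, inv_inv, one_div, inv_inv] at htail
  exact htail hbound htight hε

/-- **Uniform tightness of the weighted potentials in `L^q`** (estimate (2.8)): if the
sequence `g_i` is tight, then `I_λ(g_i)(u)·|u|^{-α}` has uniformly small `L^q` norm
outside large balls. -/
theorem weighted_potential_uniform_tightness
    (n : ℕ) (hn : 1 ≤ n) (Q p p' q q' lam α β : ℝ) (hQ : Q = 2 * n + 2)
    (hp : 1 < p) (hq' : 1 < q')
    (hq : 1 / q + 1 / q' = 1) (hp' : 1 / p + 1 / p' = 1)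
    (hlam0 : 0 < lam) (hlamQ : lam < Q)
    (hab : 0 ≤ α + β) (habQ : lam + α + β ≤ Q)
    (hβ : β < Q / p') (hα : α < Q / q)
    (hbal : 1 / p + 1 / q' + (lam + α + β) / Q = 2)
    (g : ℕ → Hn n → ℝ)
    (hmeas : ∀ i, Measurable (g i)) (hpos : ∀ i v, 0 ≤ g i v)
    (hnorm : ∀ i, eLpNorm (fun v => g i v * Hnorm v ^ β) (ENNReal.ofReal p) volume = 1)
    (htight : ∀ δ : ℝ, 0 < δ → ∃ R : ℝ, 0 < R ∧ ∀ i,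
      1 - ENNReal.ofReal δ ≤
        ∫⁻ v in Hball (0 : Hn n) R, ENNReal.ofReal (|g i v| ^ p * Hnorm v ^ (β * p))) :
    ∀ ε : ℝ, 0 < ε → ∃ M : ℝ, 0 < M ∧ ∀ i,
      eLpNorm (fun u => Ilam lam (g i) u * Hnorm u ^ (-α)) (ENNReal.ofReal q)
        (volume.restrict (Hball (0 : Hn n) M)ᶜ) ≤ ENNReal.ofReal ε := by
  exact weighted_potential_uniform_tightness_general n Q p p' q q' lam α β hQ hp hq' hq hp' hlamQ
    hab habQ hβ hα hbal g (fun i ↦ (hmeas i).aemeasurable) 1 (fun i ↦ (hnorm i).le)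
    fun δ hδ ↦ exists_eLpNorm_restrict_compl_Hball_le (by linarith) (fun i ↦ (hnorm i).le) htight hδ
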